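/- A vector v = (F,G) ∈ V₄ is stable for the action of the group G₄ = SL₂(L)×SL₃(L)×Lˣ if and only if Δ₄(v) ≠ 0 in L. -/

import Mathlib

/- The discriminant of the binary quartic A U⁴ + B U³W + C U²W² + D UW³ + E W⁴. -/
def disc4 {R : Type*} [CommRing R] (A B C D E : R) : R :=
  B ^ 2 * C ^ 2 * D ^ 2 - 4 * B ^ 2 * C ^ 3 * E - 4 * B ^ 3 * D ^ 3 + 18 * B ^ 3 * C * D * E
       - 27 * B ^ 4 * E ^ 2 - 4 * A * C ^ 3 * D ^ 2 + 16 * A * C ^ 4 * E + 18 * A * B * C * D ^ 3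
       - 80 * A * B * C ^ 2 * D * E - 6 * A * B ^ 2 * D ^ 2 * E + 144 * A * B ^ 2 * C * E ^ 2 - 27 * A ^ 2 * D ^ 4
       + 144 * A ^ 2 * C * D ^ 2 * E - 128 * A ^ 2 * C ^ 2 * E ^ 2 - 192 * A ^ 2 * B * D * E ^ 2 + 256 * A ^ 3 * E ^ 3

/- The five coefficients (in U⁴, U³W, U²W², UW³, W⁴) of the binary quartic
(mU + nW)·disc₂(F), where v = (F, mU+nW) ∈ V₄ has coordinates c = (a,…,l,m,n)
(so `c 0, …, c 13` are a,b,c,d,e,f,g,h,i,j,k,l,m,n), F = (aU+bW)X² + (cU+dW)Y² +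
(eU+fW)Z² + (gU+hW)XY + (iU+jW)XZ + (kU+lW)YZ, and disc₂ is the discriminant
4ABC + DEF − AF² − BE² − CD² of F regarded as a quadratic form in (X,Y,Z). -/
def v4QuarticCoeffs {L : Type*} [CommRing L] (c : Fin 14 → L) : Fin 5 → L :=
  ![c 6 * c 8 * c 10 * c 12 - c 4 * c 6 ^ 2 * c 12 - c 2 * c 8 ^ 2 * c 12 - c 0 * c 10 ^ 2 * c 12
       + 4 * c 0 * c 2 * c 4 * c 12,
    c 7 * c 8 * c 10 * c 12 + c 6 * c 9 * c 10 * c 12 + c 6 * c 8 * c 11 * c 12 + c 6 * c 8 * c 10 * c 13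
       - c 5 * c 6 ^ 2 * c 12 - 2 * c 4 * c 6 * c 7 * c 12 - c 4 * c 6 ^ 2 * c 13 - c 3 * c 8 ^ 2 * c 12
       - 2 * c 2 * c 8 * c 9 * c 12 - c 2 * c 8 ^ 2 * c 13 - c 1 * c 10 ^ 2 * c 12 + 4 * c 1 * c 2 * c 4 * c 12
       - 2 * c 0 * c 10 * c 11 * c 12 - c 0 * c 10 ^ 2 * c 13 + 4 * c 0 * c 3 * c 4 * c 12 + 4 * c 0 * c 2 * c 5 * c 12
       + 4 * c 0 * c 2 * c 4 * c 13,
    c 7 * c 9 * c 10 * c 12 + c 7 * c 8 * c 11 * c 12 + c 7 * c 8 * c 10 * c 13 + c 6 * c 9 * c 11 * c 12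
       + c 6 * c 9 * c 10 * c 13 + c 6 * c 8 * c 11 * c 13 - 2 * c 5 * c 6 * c 7 * c 12 - c 5 * c 6 ^ 2 * c 13
       - c 4 * c 7 ^ 2 * c 12 - 2 * c 4 * c 6 * c 7 * c 13 - 2 * c 3 * c 8 * c 9 * c 12 - c 3 * c 8 ^ 2 * c 13
       - c 2 * c 9 ^ 2 * c 12 - 2 * c 2 * c 8 * c 9 * c 13 - 2 * c 1 * c 10 * c 11 * c 12 - c 1 * c 10 ^ 2 * c 13
       + 4 * c 1 * c 3 * c 4 * c 12 + 4 * c 1 * c 2 * c 5 * c 12 + 4 * c 1 * c 2 * c 4 * c 13 - c 0 * c 11 ^ 2 * c 12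
       - 2 * c 0 * c 10 * c 11 * c 13 + 4 * c 0 * c 3 * c 5 * c 12 + 4 * c 0 * c 3 * c 4 * c 13 + 4 * c 0 * c 2 * c 5 * c 13,
    c 7 * c 9 * c 11 * c 12 + c 7 * c 9 * c 10 * c 13 + c 7 * c 8 * c 11 * c 13 + c 6 * c 9 * c 11 * c 13
       - c 5 * c 7 ^ 2 * c 12 - 2 * c 5 * c 6 * c 7 * c 13 - c 4 * c 7 ^ 2 * c 13 - c 3 * c 9 ^ 2 * c 12
       - 2 * c 3 * c 8 * c 9 * c 13 - c 2 * c 9 ^ 2 * c 13 - c 1 * c 11 ^ 2 * c 12 - 2 * c 1 * c 10 * c 11 * c 13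
       + 4 * c 1 * c 3 * c 5 * c 12 + 4 * c 1 * c 3 * c 4 * c 13 + 4 * c 1 * c 2 * c 5 * c 13 - c 0 * c 11 ^ 2 * c 13
       + 4 * c 0 * c 3 * c 5 * c 13,
    c 7 * c 9 * c 11 * c 13 - c 5 * c 7 ^ 2 * c 13 - c 3 * c 9 ^ 2 * c 13 - c 1 * c 11 ^ 2 * c 13
       + 4 * c 1 * c 3 * c 5 * c 13]

/- The invariant Δ₄(v) = disc₄((mU+nW)·disc₂(F)). -/
def Delta4 {L : Type*} [CommRing L] (c : Fin 14 → L) : L :=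
  disc4 (v4QuarticCoeffs c 0) (v4QuarticCoeffs c 1) (v4QuarticCoeffs c 2)
    (v4QuarticCoeffs c 3) (v4QuarticCoeffs c 4)

/- Zariski-closedness of a subset of affine n-space over L: it is the common zero locus
of a set of polynomial functions (with respect to the fixed coordinates). -/
def IsZariskiClosed {n : ℕ} {L : Type*} [CommRing L] (s : Set (Fin n → L)) : Prop :=
  ∃ P : Set (MvPolynomial (Fin n) L), s = {x | ∀ p ∈ P, MvPolynomial.eval x p = 0}

/- The pair (F, G) ∈ V₄ with coordinates c (variables: inl 0,1 = U,W; inr 0,1,2 = X,Y,Z):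
F = (aU+bW)X² + (cU+dW)Y² + (eU+fW)Z² + (gU+hW)XY + (iU+jW)XZ + (kU+lW)YZ, G = mU + nW. -/
noncomputable def toV4 {L : Type*} [CommRing L] (c : Fin 14 → L) :
    MvPolynomial (Fin 2 ⊕ Fin 3) L × MvPolynomial (Fin 2 ⊕ Fin 3) L :=
  ((MvPolynomial.C (c 0) * MvPolynomial.X (Sum.inl 0) + MvPolynomial.C (c 1) * MvPolynomial.X (Sum.inl 1)) * MvPolynomial.X (Sum.inr 0) ^ 2
    + (MvPolynomial.C (c 2) * MvPolynomial.X (Sum.inl 0) + MvPolynomial.C (c 3) * MvPolynomial.X (Sum.inl 1)) * MvPolynomial.X (Sum.inr 1) ^ 2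
    + (MvPolynomial.C (c 4) * MvPolynomial.X (Sum.inl 0) + MvPolynomial.C (c 5) * MvPolynomial.X (Sum.inl 1)) * MvPolynomial.X (Sum.inr 2) ^ 2
    + (MvPolynomial.C (c 6) * MvPolynomial.X (Sum.inl 0) + MvPolynomial.C (c 7) * MvPolynomial.X (Sum.inl 1)) * (MvPolynomial.X (Sum.inr 0) * MvPolynomial.X (Sum.inr 1))
    + (MvPolynomial.C (c 8) * MvPolynomial.X (Sum.inl 0) + MvPolynomial.C (c 9) * MvPolynomial.X (Sum.inl 1)) * (MvPolynomial.X (Sum.inr 0) * MvPolynomial.X (Sum.inr 2))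
    + (MvPolynomial.C (c 10) * MvPolynomial.X (Sum.inl 0) + MvPolynomial.C (c 11) * MvPolynomial.X (Sum.inl 1)) * (MvPolynomial.X (Sum.inr 1) * MvPolynomial.X (Sum.inr 2)),
   MvPolynomial.C (c 12) * MvPolynomial.X (Sum.inl 0) + MvPolynomial.C (c 13) * MvPolynomial.X (Sum.inl 1))

/- Linear substitution of (U,W) by A ∈ SL₂(L) and of (X,Y,Z) by B ∈ SL₃(L). -/
noncomputable def sub4 {L : Type*} [CommRing L]
    (A : Matrix.SpecialLinearGroup (Fin 2) L) (B : Matrix.SpecialLinearGroup (Fin 3) L)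
    (v : MvPolynomial (Fin 2 ⊕ Fin 3) L) : MvPolynomial (Fin 2 ⊕ Fin 3) L :=
  MvPolynomial.aeval
    (Sum.elim (fun i => ∑ j : Fin 2, MvPolynomial.C (A.1 i j) * MvPolynomial.X (Sum.inl j))
              (fun i => ∑ j : Fin 3, MvPolynomial.C (B.1 i j) * MvPolynomial.X (Sum.inr j))) v

/- The action of G₄ = SL₂(L) × SL₃(L) × Lˣ on V₄:
(A, B, t)·(F, G) = (t⁻¹·F′, t³·G′), where F′, G′ are obtained by linear substitution. -/
noncomputable def act4 {L : Type*} [Field L]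
    (g : Matrix.SpecialLinearGroup (Fin 2) L × Matrix.SpecialLinearGroup (Fin 3) L × Lˣ)
    (v : MvPolynomial (Fin 2 ⊕ Fin 3) L × MvPolynomial (Fin 2 ⊕ Fin 3) L) :
    MvPolynomial (Fin 2 ⊕ Fin 3) L × MvPolynomial (Fin 2 ⊕ Fin 3) L :=
  (((g.2.2 : L))⁻¹ • sub4 g.1 g.2.1 v.1, ((g.2.2 : L)) ^ 3 • sub4 g.1 g.2.1 v.2)

/- Stability: the orbit of v (in the coordinate space of V₄ with respect to its monomial
basis) is Zariski-closed and the stabilizer of v in G₄ is finite. -/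
def Stable4 {L : Type*} [Field L] (c : Fin 14 → L) : Prop :=
  IsZariskiClosed {c' : Fin 14 → L |
    ∃ g : Matrix.SpecialLinearGroup (Fin 2) L × Matrix.SpecialLinearGroup (Fin 3) L × Lˣ,
      toV4 c' = act4 g (toV4 c)} ∧
  {g : Matrix.SpecialLinearGroup (Fin 2) L × Matrix.SpecialLinearGroup (Fin 3) L × Lˣ |
      act4 g (toV4 c) = toV4 c}.Finite


open Matrix

section Forms

variable {R : Type*} [CommRing R]

/-- Half-discriminant of `A X² + B Y² + C Z² + D XY + E XZ + F YZ`. -/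
def disc2 (A B C D E F : R) : R :=
  4 * A * B * C + D * E * F - A * F ^ 2 - B * E ^ 2 - C * D ^ 2

/-- Discriminant of the binary cubic with coefficients `a, b, c, d`. -/
def disc3 (a b c d : R) : R :=
  b ^ 2 * c ^ 2 - 4 * a * c ^ 3 - 4 * b ^ 3 * d - 27 * a ^ 2 * d ^ 2 + 18 * a * b * c * d

/-- Value of the ternary quadratic form with the given coefficients. -/
def conic (A B C D E F : R) (x : Fin 3 → R) : R :=
  A * x 0 ^ 2 + B * x 1 ^ 2 + C * x 2 ^ 2 + D * (x 0 * x 1) + E * (x 0 * x 2) + F * (x 1 * x 2)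

theorem disc2_substitution (A B C D E F a b c d e f g h i : R) :
    disc2 (conic A B C D E F ![a, d, g]) (conic A B C D E F ![b, e, h])
      (conic A B C D E F ![c, f, i])
      (conic A B C D E F ![a + b, d + e, g + h] - conic A B C D E F ![a, d, g]
        - conic A B C D E F ![b, e, h])
      (conic A B C D E F ![a + c, d + f, g + i] - conic A B C D E F ![a, d, g]
        - conic A B C D E F ![c, f, i])
      (conic A B C D E F ![b + c, e + f, h + i] - conic A B C D E F ![b, e, h]
        - conic A B C D E F ![c, f, i])
    = (a * e * i - a * f * h - b * d * i + b * f * g + c * d * h - c * e * g) ^ 2 *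
      disc2 A B C D E F := by
  simp only [disc2, conic, cons_val]
  ring

/-- The discriminant of the product of a linear form and a cubic. -/
theorem disc4_linear_mul_cubic (a b c d m n : R) :
    disc4 (m * a) (m * b + n * a) (m * c + n * b) (m * d + n * c) (n * d)
      = disc3 a b c d * (a * n ^ 3 - b * n ^ 2 * m + c * n * m ^ 2 - d * m ^ 3) ^ 2 := by
  unfold disc4 disc3
  ring

/-- Value of a binary quartic. -/
def quarticEval (q : Fin 5 → R) (u : Fin 2 → R) : R :=
  q 0 * u 0 ^ 4 + q 1 * u 0 ^ 3 * u 1 + q 2 * u 0 ^ 2 * u 1 ^ 2 + q 3 * u 0 * u 1 ^ 3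
    + q 4 * u 1 ^ 4

/-- The quadratic invariant of a binary quartic. -/
def quarticI (q : Fin 5 → R) : R := q 2 ^ 2 - 3 * q 1 * q 3 + 12 * q 0 * q 4

/-- The cubic invariant of a binary quartic. -/
def quarticJ (q : Fin 5 → R) : R :=
  2 * q 2 ^ 3 - 9 * q 1 * q 2 * q 3 + 27 * q 0 * q 3 ^ 2 + 27 * q 1 ^ 2 * q 4
    - 72 * q 0 * q 2 * q 4

/-- The discriminant of a binary quartic given by its coefficient vector. -/
def quarticDisc (q : Fin 5 → R) : R := disc4 (q 0) (q 1) (q 2) (q 3) (q 4)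

theorem quarticDisc_mul (q : Fin 5 → R) :
    27 * quarticDisc q = 4 * quarticI q ^ 3 - quarticJ q ^ 2 := by
  unfold quarticDisc disc4 quarticI quarticJ
  ring

/-- Coefficients of the quartic obtained by the substitution
`U ↦ p U + q W`, `W ↦ r U + s W`. -/
def quarticSub (k : Fin 5 → R) (p q r s : R) : Fin 5 → R :=
  ![k 0 * p ^ 4 + k 1 * (p ^ 3 * r) + k 2 * (p ^ 2 * r ^ 2) + k 3 * (p * r ^ 3) + k 4 * r ^ 4,
    k 0 * (4 * p ^ 3 * q) + k 1 * (p ^ 3 * s + 3 * p ^ 2 * q * r)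
      + k 2 * (2 * p ^ 2 * r * s + 2 * p * q * r ^ 2) + k 3 * (r ^ 3 * q + 3 * r ^ 2 * s * p)
      + k 4 * (4 * r ^ 3 * s),
    k 0 * (6 * p ^ 2 * q ^ 2) + k 1 * (3 * p ^ 2 * q * s + 3 * p * q ^ 2 * r)
      + k 2 * (p ^ 2 * s ^ 2 + 4 * p * q * r * s + q ^ 2 * r ^ 2)
      + k 3 * (3 * r ^ 2 * s * q + 3 * r * s ^ 2 * p) + k 4 * (6 * r ^ 2 * s ^ 2),
    k 0 * (4 * p * q ^ 3) + k 1 * (3 * p * q ^ 2 * s + q ^ 3 * r)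
      + k 2 * (2 * p * q * s ^ 2 + 2 * q ^ 2 * r * s) + k 3 * (3 * r * s ^ 2 * q + s ^ 3 * p)
      + k 4 * (4 * r * s ^ 3),
    k 0 * q ^ 4 + k 1 * (q ^ 3 * s) + k 2 * (q ^ 2 * s ^ 2) + k 3 * (q * s ^ 3) + k 4 * s ^ 4]

theorem quarticEval_quarticSub (k : Fin 5 → R) (p q r s : R) (u : Fin 2 → R) :
    quarticEval (quarticSub k p q r s) u
      = quarticEval k ![p * u 0 + q * u 1, r * u 0 + s * u 1] := by
  simp only [quarticEval, quarticSub, cons_val]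
  ring

theorem quarticI_quarticSub (k : Fin 5 → R) (p q r s : R) :
    quarticI (quarticSub k p q r s) = (p * s - q * r) ^ 4 * quarticI k := by
  simp only [quarticI, quarticSub, cons_val]
  ring

theorem quarticJ_quarticSub (k : Fin 5 → R) (p q r s : R) :
    quarticJ (quarticSub k p q r s) = (p * s - q * r) ^ 6 * quarticJ k := by
  simp only [quarticJ, quarticSub, cons_val]
  ring

theorem map_quarticDisc {S : Type*} [CommRing S] (φ : R →+* S) (k : Fin 5 → R) :
    φ (quarticDisc k) = quarticDisc (fun i => φ (k i)) := by
  simp [quarticDisc, disc4, map_ofNat]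

theorem map_quarticI {S : Type*} [CommRing S] (φ : R →+* S) (k : Fin 5 → R) :
    φ (quarticI k) = quarticI (fun i => φ (k i)) := by
  simp [quarticI, map_ofNat]

theorem map_quarticJ {S : Type*} [CommRing S] (φ : R →+* S) (k : Fin 5 → R) :
    φ (quarticJ k) = quarticJ (fun i => φ (k i)) := by
  simp [quarticJ, map_ofNat]

theorem map_quarticSub {S : Type*} [CommRing S] (φ : R →+* S) (k : Fin 5 → R) (p q r s : R) :
    (fun i => φ (quarticSub k p q r s i))
      = quarticSub (fun i => φ (k i)) (φ p) (φ q) (φ r) (φ s) := by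
  funext i
  fin_cases i <;> simp [quarticSub, map_ofNat]

/-- Over `ℤ[k, p, q, r, s]` this follows from `27 disc = 4 I³ - J²`; the general case is a
specialization, so that no division by `27` is needed. -/
theorem quarticDisc_quarticSub (k : Fin 5 → R) (p q r s : R) :
    quarticDisc (quarticSub k p q r s) = (p * s - q * r) ^ 12 * quarticDisc k := by
  have universal : ∀ (k : Fin 5 → MvPolynomial (Fin 9) ℤ) (p q r s : MvPolynomial (Fin 9) ℤ),
      quarticDisc (quarticSub k p q r s) = (p * s - q * r) ^ 12 * quarticDisc k := by
    intro k p q r s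
    have h27 : (27 : MvPolynomial (Fin 9) ℤ) ≠ 0 := by norm_num
    apply mul_left_cancel₀ h27
    rw [quarticDisc_mul, quarticI_quarticSub, quarticJ_quarticSub]
    linear_combination -(p * s - q * r) ^ 12 * quarticDisc_mul k
  have h := congrArg
    (MvPolynomial.eval₂Hom (Int.castRingHom R) ![k 0, k 1, k 2, k 3, k 4, p, q, r, s])
    (universal ![.X 0, .X 1, .X 2, .X 3, .X 4] (.X 5) (.X 6) (.X 7) (.X 8))
  rw [map_mul, map_pow, map_sub, map_mul, map_mul, map_quarticDisc, map_quarticDisc,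
    map_quarticSub] at h
  have hk : (fun i => (MvPolynomial.eval₂Hom (Int.castRingHom R)
      ![k 0, k 1, k 2, k 3, k 4, p, q, r, s])
        ((![.X 0, .X 1, .X 2, .X 3, .X 4] : Fin 5 → MvPolynomial (Fin 9) ℤ) i)) = k := by
    funext i
    fin_cases i <;> simp
  rw [hk] at h
  simpa using h

end Forms

/-- A binary quartic over an infinite field is determined by its values. -/
theorem quarticEval_injective {L : Type*} [Field L] [Infinite L] {k k' : Fin 5 → L}
    (h : ∀ u, quarticEval k u = quarticEval k' u) : k = k' := by
  have hp : ∑ i : Fin 5, Polynomial.C (k i) * Polynomial.X ^ (i : ℕ)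
      = ∑ i : Fin 5, Polynomial.C (k' i) * Polynomial.X ^ (i : ℕ) := by
    apply Polynomial.funext
    intro x
    have := h ![1, x]
    simp [quarticEval, Fin.sum_univ_five] at this ⊢
    linear_combination this
  funext i
  have := congrArg (fun P => Polynomial.coeff P (i : ℕ)) hp
  fin_cases i <;> simpa [Fin.sum_univ_five, Polynomial.coeff_X, Polynomial.coeff_one] using this

/-- The group acting on the space of pairs `(F, G)`. -/
abbrev Group4 (L : Type*) [Field L] : Type _ :=
  SpecialLinearGroup (Fin 2) L × SpecialLinearGroup (Fin 3) L × Lˣ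

section Action

variable {L : Type*} [Field L]

/-- The value of `F` at `(u, x)`. -/
def evalF (c : Fin 14 → L) (u : Fin 2 → L) (x : Fin 3 → L) : L :=
  conic (c 0 * u 0 + c 1 * u 1) (c 2 * u 0 + c 3 * u 1) (c 4 * u 0 + c 5 * u 1)
    (c 6 * u 0 + c 7 * u 1) (c 8 * u 0 + c 9 * u 1) (c 10 * u 0 + c 11 * u 1) x

/-- The value of `G` at `u`. -/
def evalG (c : Fin 14 → L) (u : Fin 2 → L) : L := c 12 * u 0 + c 13 * u 1

/-- The value of `disc₂ F` at `u`. -/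
def evalD (c : Fin 14 → L) (u : Fin 2 → L) : L :=
  disc2 (c 0 * u 0 + c 1 * u 1) (c 2 * u 0 + c 3 * u 1) (c 4 * u 0 + c 5 * u 1)
    (c 6 * u 0 + c 7 * u 1) (c 8 * u 0 + c 9 * u 1) (c 10 * u 0 + c 11 * u 1)

/-- `c'` is the image of `c` under `g`, expressed through values of the forms. -/
def IsImage (g : Group4 L) (c c' : Fin 14 → L) : Prop :=
  (∀ u x, evalF c' u x = (g.2.2 : L)⁻¹ * evalF c (g.1.1 *ᵥ u) (g.2.1.1 *ᵥ x)) ∧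
  ∀ u, evalG c' u = (g.2.2 : L) ^ 3 * evalG c (g.1.1 *ᵥ u)

theorem toV4_eq_act4_iff [Infinite L] (g : Group4 L) (c c' : Fin 14 → L) :
    toV4 c' = act4 g (toV4 c) ↔ IsImage g c c' := by
  have hF : ∀ (c : Fin 14 → L) (w : Fin 2 ⊕ Fin 3 → L), MvPolynomial.eval w (toV4 c).1
      = evalF c (fun i => w (.inl i)) (fun i => w (.inr i)) := by
    intro c w
    simp [toV4, evalF, conic]
  have hG : ∀ (c : Fin 14 → L) (w : Fin 2 ⊕ Fin 3 → L), MvPolynomial.eval w (toV4 c).2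
      = evalG c (fun i => w (.inl i)) := by
    intro c w
    simp [toV4, evalG]
  have hsub : ∀ (w : Fin 2 ⊕ Fin 3 → L) (p : MvPolynomial (Fin 2 ⊕ Fin 3) L),
      MvPolynomial.eval w (sub4 g.1 g.2.1 p) = MvPolynomial.eval
        (Sum.elim (g.1.1 *ᵥ fun i => w (.inl i)) (g.2.1.1 *ᵥ fun i => w (.inr i))) p := by
    intro w p
    rw [sub4]
    induction p using MvPolynomial.induction_on with
    | C a => simp
    | add p q hp hq => simp only [map_add, hp, hq]
    | mul_X p i hp =>
      rw [map_mul, map_mul, map_mul, hp]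
      rcases i with i | i <;>
        simp only [MvPolynomial.aeval_X, Sum.elim_inl, Sum.elim_inr, map_sum, map_mul,
          MvPolynomial.eval_C, MvPolynomial.eval_X] <;> rfl
  constructor
  · intro h
    refine ⟨fun u x => ?_, fun u => ?_⟩
    · have := congrArg (fun v => MvPolynomial.eval (Sum.elim u x) v.1) h
      simpa [act4, hsub, hF] using this
    · have := congrArg (fun v => MvPolynomial.eval (Sum.elim u 0) v.2) h
      simpa [act4, hsub, hG] using this
  · rintro ⟨h1, h2⟩
    refine Prod.ext (MvPolynomial.funext fun w => ?_) (MvPolynomial.funext fun w => ?_)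
    · simp [act4, hsub, hF, h1]
    · simp [act4, hsub, hG, h2]

theorem IsImage.one (c : Fin 14 → L) : IsImage 1 c c := by
  constructor <;> simp

theorem IsImage.trans {g h : Group4 L} {c c' c'' : Fin 14 → L} (hg : IsImage g c c')
    (hh : IsImage h c' c'') : IsImage (g * h) c c'' := by
  have h1 : (g * h).1.1 = g.1.1 * h.1.1 := rfl
  have h2 : (g * h).2.1.1 = g.2.1.1 * h.2.1.1 := rfl
  have h3 : ((g * h).2.2 : L) = g.2.2 * h.2.2 := rfl
  refine ⟨fun u x => ?_, fun u => ?_⟩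
  · rw [hh.1, hg.1]
    simp only [h1, h2, h3, mulVec_mulVec, mul_inv]
    ring
  · rw [hh.2, hg.2]
    simp only [h1, h3, mulVec_mulVec]
    ring

theorem coeff_eq_evalF (c : Fin 14 → L) : c =
    ![evalF c ![1, 0] ![1, 0, 0], evalF c ![0, 1] ![1, 0, 0],
      evalF c ![1, 0] ![0, 1, 0], evalF c ![0, 1] ![0, 1, 0],
      evalF c ![1, 0] ![0, 0, 1], evalF c ![0, 1] ![0, 0, 1],
      evalF c ![1, 0] ![1, 1, 0] - evalF c ![1, 0] ![1, 0, 0] - evalF c ![1, 0] ![0, 1, 0],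
      evalF c ![0, 1] ![1, 1, 0] - evalF c ![0, 1] ![1, 0, 0] - evalF c ![0, 1] ![0, 1, 0],
      evalF c ![1, 0] ![1, 0, 1] - evalF c ![1, 0] ![1, 0, 0] - evalF c ![1, 0] ![0, 0, 1],
      evalF c ![0, 1] ![1, 0, 1] - evalF c ![0, 1] ![1, 0, 0] - evalF c ![0, 1] ![0, 0, 1],
      evalF c ![1, 0] ![0, 1, 1] - evalF c ![1, 0] ![0, 1, 0] - evalF c ![1, 0] ![0, 0, 1],
      evalF c ![0, 1] ![0, 1, 1] - evalF c ![0, 1] ![0, 1, 0] - evalF c ![0, 1] ![0, 0, 1],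
      evalG c ![1, 0], evalG c ![0, 1]] := by
  funext i
  fin_cases i <;> simp [evalF, evalG, conic] <;> ring

theorem eq_of_eval_eq {c c' : Fin 14 → L} (hF : ∀ u x, evalF c u x = evalF c' u x)
    (hG : ∀ u, evalG c u = evalG c' u) : c = c' := by
  rw [coeff_eq_evalF c, coeff_eq_evalF c']
  simp only [hF, hG]

theorem IsImage.unique {g : Group4 L} {c c' c'' : Fin 14 → L} (h : IsImage g c c')
    (h' : IsImage g c c'') : c' = c'' :=
  eq_of_eval_eq (fun u x => by rw [h.1, h'.1]) (fun u => by rw [h.2, h'.2])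

theorem exists_isImage (g : Group4 L) (c : Fin 14 → L) : ∃ c', IsImage g c c' := by
  obtain ⟨A, B, t⟩ := g
  let f : (Fin 2 → L) → (Fin 3 → L) → L := fun u x =>
    (t : L)⁻¹ * evalF c (A.1 *ᵥ u) (B.1 *ᵥ x)
  let k : (Fin 2 → L) → L := fun u => (t : L) ^ 3 * evalG c (A.1 *ᵥ u)
  refine ⟨![f ![1, 0] ![1, 0, 0], f ![0, 1] ![1, 0, 0],
      f ![1, 0] ![0, 1, 0], f ![0, 1] ![0, 1, 0],
      f ![1, 0] ![0, 0, 1], f ![0, 1] ![0, 0, 1],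
      f ![1, 0] ![1, 1, 0] - f ![1, 0] ![1, 0, 0] - f ![1, 0] ![0, 1, 0],
      f ![0, 1] ![1, 1, 0] - f ![0, 1] ![1, 0, 0] - f ![0, 1] ![0, 1, 0],
      f ![1, 0] ![1, 0, 1] - f ![1, 0] ![1, 0, 0] - f ![1, 0] ![0, 0, 1],
      f ![0, 1] ![1, 0, 1] - f ![0, 1] ![1, 0, 0] - f ![0, 1] ![0, 0, 1],
      f ![1, 0] ![0, 1, 1] - f ![1, 0] ![0, 1, 0] - f ![1, 0] ![0, 0, 1],
      f ![0, 1] ![0, 1, 1] - f ![0, 1] ![0, 1, 0] - f ![0, 1] ![0, 0, 1],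
      k ![1, 0], k ![0, 1]], fun u x => ?_, fun u => ?_⟩
  · simp only [f, evalF, conic, cons_val, mulVec, dotProduct, Fin.sum_univ_two,
      Fin.sum_univ_three]
    ring
  · simp only [k, evalG, cons_val, mulVec, dotProduct, Fin.sum_univ_two]
    ring

theorem IsImage.symm {g : Group4 L} {c c' : Fin 14 → L} (h : IsImage g c c') :
    IsImage g⁻¹ c' c := by
  obtain ⟨d, hd⟩ := exists_isImage g⁻¹ c'
  have := h.trans hd
  rw [mul_inv_cancel] at this
  rwa [this.unique (IsImage.one c)] at hd

theorem finite_stabilizer_of_isImage {g : Group4 L} {c c' : Fin 14 → L} (h : IsImage g c c')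
    (hfin : {k : Group4 L | IsImage k c c}.Finite) : {k : Group4 L | IsImage k c' c'}.Finite := by
  refine Set.Finite.of_finite_image (f := fun k => g * k * g⁻¹) (hfin.subset ?_) ?_
  · rintro _ ⟨k, hk, rfl⟩
    exact (h.trans hk).trans h.symm
  · intro k _ k' _ hkk
    simpa using hkk

theorem conic_smul_substitution (t A B C D E F A' B' C' D' E' F' : L)
    (M : SpecialLinearGroup (Fin 3) L)
    (h : ∀ x, conic A' B' C' D' E' F' x = t * conic A B C D E F (M.1 *ᵥ x)) :
    disc2 A' B' C' D' E' F' = t ^ 3 * disc2 A B C D E F := by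
  have hdet := M.2
  rw [det_fin_three] at hdet
  have key := disc2_substitution A B C D E F (M.1 0 0) (M.1 0 1) (M.1 0 2) (M.1 1 0) (M.1 1 1)
    (M.1 1 2) (M.1 2 0) (M.1 2 1) (M.1 2 2)
  have hM : ∀ x y z : L, M.1 *ᵥ ![x, y, z] = ![M.1 0 0 * x + M.1 0 1 * y + M.1 0 2 * z,
      M.1 1 0 * x + M.1 1 1 * y + M.1 1 2 * z, M.1 2 0 * x + M.1 2 1 * y + M.1 2 2 * z] := by
    intro x y z
    funext i
    fin_cases i <;> simp [mulVec, dotProduct, Fin.sum_univ_three]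
  have hA := h ![1, 0, 0]
  have hB := h ![0, 1, 0]
  have hC := h ![0, 0, 1]
  have hD := h ![1, 1, 0]
  have hE := h ![1, 0, 1]
  have hF := h ![0, 1, 1]
  simp only [hM, mul_one, mul_zero, add_zero, zero_add] at hA hB hC hD hE hF
  have eA : conic A' B' C' D' E' F' ![1, 0, 0] = A' := by simp [conic]
  have eB : conic A' B' C' D' E' F' ![0, 1, 0] = B' := by simp [conic]
  have eC : conic A' B' C' D' E' F' ![0, 0, 1] = C' := by simp [conic]
  have eD : conic A' B' C' D' E' F' ![1, 1, 0] = A' + B' + D' := by simp [conic]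
  have eE : conic A' B' C' D' E' F' ![1, 0, 1] = A' + C' + E' := by simp [conic]
  have eF : conic A' B' C' D' E' F' ![0, 1, 1] = B' + C' + F' := by simp [conic]
  rw [hdet, one_pow, one_mul] at key
  rw [← key]
  have e1 : A' = _ := eA.symm.trans hA
  have e2 : B' = _ := eB.symm.trans hB
  have e3 : C' = _ := eC.symm.trans hC
  have e4 : D' = _ := (eq_sub_of_add_eq' (eD.symm.trans hD))
  have e5 : E' = _ := (eq_sub_of_add_eq' (eE.symm.trans hE))
  have e6 : F' = _ := (eq_sub_of_add_eq' (eF.symm.trans hF))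
  rw [e4, e5, e6, e1, e2, e3]
  generalize conic A B C D E F _ = a1
  generalize conic A B C D E F _ = a2
  generalize conic A B C D E F _ = a3
  generalize conic A B C D E F _ = a4
  generalize conic A B C D E F _ = a5
  generalize conic A B C D E F _ = a6
  unfold disc2
  ring

theorem IsImage.evalD {g : Group4 L} {c c' : Fin 14 → L} (h : IsImage g c c') (u : Fin 2 → L) :
    evalD c' u = ((g.2.2 : L)⁻¹) ^ 3 * evalD c (g.1.1 *ᵥ u) :=
  conic_smul_substitution _ _ _ _ _ _ _ _ _ _ _ _ _ g.2.1 (h.1 u)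

/-- The coefficients of the binary cubic `disc₂ F`. -/
def cubicCoeffs (c : Fin 14 → L) : Fin 4 → L :=
  ![c 6 * c 8 * c 10 - c 4 * c 6 ^ 2 - c 2 * c 8 ^ 2 - c 0 * c 10 ^ 2 + 4 * c 0 * c 2 * c 4,
    c 7 * c 8 * c 10 + c 6 * c 9 * c 10 + c 6 * c 8 * c 11 - c 5 * c 6 ^ 2 - 2 * c 4 * c 6 * c 7
      - c 3 * c 8 ^ 2 - 2 * c 2 * c 8 * c 9 - c 1 * c 10 ^ 2 + 4 * c 1 * c 2 * c 4
      - 2 * c 0 * c 10 * c 11 + 4 * c 0 * c 3 * c 4 + 4 * c 0 * c 2 * c 5,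
    c 6 * c 9 * c 11 + c 7 * c 8 * c 11 + c 7 * c 9 * c 10 - c 4 * c 7 ^ 2 - 2 * c 5 * c 6 * c 7
      - c 2 * c 9 ^ 2 - 2 * c 3 * c 8 * c 9 - c 0 * c 11 ^ 2 + 4 * c 0 * c 3 * c 5
      - 2 * c 1 * c 10 * c 11 + 4 * c 1 * c 2 * c 5 + 4 * c 1 * c 3 * c 4,
    c 7 * c 9 * c 11 - c 5 * c 7 ^ 2 - c 3 * c 9 ^ 2 - c 1 * c 11 ^ 2 + 4 * c 1 * c 3 * c 5]

theorem evalD_eq_cubic (c : Fin 14 → L) (u : Fin 2 → L) :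
    evalD c u = cubicCoeffs c 0 * u 0 ^ 3 + cubicCoeffs c 1 * u 0 ^ 2 * u 1
      + cubicCoeffs c 2 * u 0 * u 1 ^ 2 + cubicCoeffs c 3 * u 1 ^ 3 := by
  simp only [evalD, cubicCoeffs, disc2, cons_val]
  ring

theorem v4QuarticCoeffs_eq_mul (c : Fin 14 → L) : v4QuarticCoeffs c =
    ![c 12 * cubicCoeffs c 0, c 12 * cubicCoeffs c 1 + c 13 * cubicCoeffs c 0,
      c 12 * cubicCoeffs c 2 + c 13 * cubicCoeffs c 1,
      c 12 * cubicCoeffs c 3 + c 13 * cubicCoeffs c 2, c 13 * cubicCoeffs c 3] := by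
  funext i
  fin_cases i <;> simp [v4QuarticCoeffs, cubicCoeffs] <;> ring

theorem Delta4_eq (c : Fin 14 → L) : Delta4 c =
    disc3 (cubicCoeffs c 0) (cubicCoeffs c 1) (cubicCoeffs c 2) (cubicCoeffs c 3) *
      evalD c ![c 13, -c 12] ^ 2 := by
  rw [Delta4, v4QuarticCoeffs_eq_mul, evalD_eq_cubic]
  simp only [cons_val]
  rw [disc4_linear_mul_cubic]
  ring

theorem quarticEval_v4QuarticCoeffs (c : Fin 14 → L) (u : Fin 2 → L) :
    quarticEval (v4QuarticCoeffs c) u = evalG c u * evalD c u := by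
  rw [v4QuarticCoeffs_eq_mul, evalD_eq_cubic]
  simp only [quarticEval, evalG, cons_val]
  ring

theorem IsImage.v4QuarticCoeffs [Infinite L] {g : Group4 L} {c c' : Fin 14 → L}
    (h : IsImage g c c') : v4QuarticCoeffs c' =
      quarticSub (v4QuarticCoeffs c) (g.1.1 0 0) (g.1.1 0 1) (g.1.1 1 0) (g.1.1 1 1) := by
  apply quarticEval_injective
  intro u
  have hu : ![g.1.1 0 0 * u 0 + g.1.1 0 1 * u 1, g.1.1 1 0 * u 0 + g.1.1 1 1 * u 1]
      = g.1.1 *ᵥ u := by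
    funext i
    fin_cases i <;> simp [mulVec, dotProduct, Fin.sum_univ_two]
  rw [quarticEval_quarticSub, hu, quarticEval_v4QuarticCoeffs, quarticEval_v4QuarticCoeffs, h.2,
    h.evalD]
  have := g.2.2.ne_zero
  field_simp

theorem IsImage.invariants [Infinite L] {g : Group4 L} {c c' : Fin 14 → L}
    (h : IsImage g c c') :
    quarticI (_root_.v4QuarticCoeffs c') = quarticI (_root_.v4QuarticCoeffs c) ∧
    quarticJ (_root_.v4QuarticCoeffs c') = quarticJ (_root_.v4QuarticCoeffs c) ∧
    Delta4 c' = Delta4 c := by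
  have hdet := g.1.2
  rw [det_fin_two] at hdet
  change _ ∧ _ ∧ quarticDisc (_root_.v4QuarticCoeffs c') = quarticDisc (_root_.v4QuarticCoeffs c)
  rw [h.v4QuarticCoeffs, quarticI_quarticSub, quarticJ_quarticSub, quarticDisc_quarticSub, hdet]
  simp

end Action

section AlgClosed

variable {L : Type*} [Field L] [IsAlgClosed L]

/-- A quadratic polynomial splits, in terms of its coefficients. -/
theorem exists_add_eq_mul_eq (b c : L) : ∃ s s' : L, s + s' = b ∧ s * s' = c := by
  have hdeg : (Polynomial.X ^ 2 + Polynomial.C (-b) * Polynomial.X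
      + Polynomial.C c : Polynomial L).degree = 2 := by
    compute_degree!
  obtain ⟨s, hs⟩ := IsAlgClosed.exists_root _ (by rw [hdeg]; decide : Polynomial.degree
    (Polynomial.X ^ 2 + Polynomial.C (-b) * Polynomial.X + Polynomial.C c : Polynomial L) ≠ 0)
  simp [Polynomial.IsRoot] at hs
  exact ⟨s, b - s, by ring, by linear_combination -hs⟩

theorem exists_quadratic_root (a b c : L) (ha : a ≠ 0) : ∃ x : L, a * x ^ 2 + b * x + c = 0 := by
  obtain ⟨s, s', h1, h2⟩ := exists_add_eq_mul_eq (-b / a) (c / a)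
  refine ⟨s, ?_⟩
  field_simp at h1 h2
  linear_combination s * h1 - h2

theorem exists_cubic_root (a b c d : L) (ha : a ≠ 0) :
    ∃ x : L, a * x ^ 3 + b * x ^ 2 + c * x + d = 0 := by
  have hdeg : (Polynomial.C a * Polynomial.X ^ 3 + Polynomial.C b * Polynomial.X ^ 2
      + Polynomial.C c * Polynomial.X + Polynomial.C d : Polynomial L).degree = 3 :=
    Polynomial.degree_cubic ha
  obtain ⟨s, hs⟩ := IsAlgClosed.exists_root _ (by rw [hdeg]; decide : Polynomial.degree
    (Polynomial.C a * Polynomial.X ^ 3 + Polynomial.C b * Polynomial.X ^ 2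
      + Polynomial.C c * Polynomial.X + Polynomial.C d : Polynomial L) ≠ 0)
  exact ⟨s, by simpa [Polynomial.IsRoot] using hs⟩

/-- A nonzero zero of a binary quadratic form. -/
theorem exists_binary_quadratic_zero (a b c : L) :
    ∃ x y : L, (x ≠ 0 ∨ y ≠ 0) ∧ a * x ^ 2 + b * x * y + c * y ^ 2 = 0 := by
  by_cases ha : a = 0
  · exact ⟨1, 0, by simp, by simp [ha]⟩
  · obtain ⟨x, hx⟩ := exists_quadratic_root a b c ha
    exact ⟨x, 1, by simp, by linear_combination hx⟩

theorem conic_factor_of_left_ne_zero (A B C D E F : L) (hA : A ≠ 0)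
    (h : disc2 A B C D E F = 0) :
    ∃ l l' : Fin 3 → L, ∀ x, conic A B C D E F x = (l ⬝ᵥ x) * (l' ⬝ᵥ x) := by
  obtain ⟨s, s', hs, hs'⟩ := exists_add_eq_mul_eq (D / A) (B / A)
  obtain ⟨t, t', ht, ht'⟩ := exists_add_eq_mul_eq (E / A) (C / A)
  have hD : D = A * (s + s') := by rw [hs]; field_simp
  have hB : B = A * (s * s') := by rw [hs']; field_simp
  have hE : E = A * (t + t') := by rw [ht]; field_simp
  have hC : C = A * (t * t') := by rw [ht']; field_simp
  have key : (F - A * (s * t' + s' * t)) * (F - A * (s * t + s' * t')) = 0 := by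
    have : A * ((F - A * (s * t' + s' * t)) * (F - A * (s * t + s' * t'))) = 0 := by
      rw [← neg_eq_zero, ← h, hD, hB, hE, hC]
      unfold disc2
      ring
    exact (mul_eq_zero.mp this).resolve_left hA
  rcases mul_eq_zero.mp key with hF | hF
  · refine ⟨![A, A * s, A * t], ![1, s', t'], fun x => ?_⟩
    simp only [conic, dotProduct, Fin.sum_univ_three, cons_val]
    rw [hD, hB, hE, hC, sub_eq_zero.mp hF]
    ring
  · refine ⟨![A, A * s, A * t'], ![1, s', t], fun x => ?_⟩
    simp only [conic, dotProduct, Fin.sum_univ_three, cons_val]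
    rw [hD, hB, hE, hC, sub_eq_zero.mp hF]
    ring

/-- A ternary quadratic form with vanishing half-discriminant is a product of linear forms. -/
theorem conic_factor (A B C D E F : L) (h : disc2 A B C D E F = 0) :
    ∃ l l' : Fin 3 → L, ∀ x, conic A B C D E F x = (l ⬝ᵥ x) * (l' ⬝ᵥ x) := by
  by_cases hA : A = 0
  · by_cases hB : B = 0
    · by_cases hC : C = 0
      · subst hA hB hC
        have h0 : D * E * F = 0 := by simpa [disc2] using h
        rcases mul_eq_zero.mp h0 with h0 | h0
        · rcases mul_eq_zero.mp h0 with h0 | h0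
          · refine ⟨![0, 0, 1], ![E, F, 0], fun x => ?_⟩
            simp only [conic, dotProduct, Fin.sum_univ_three, cons_val, h0]
            ring
          · refine ⟨![0, 1, 0], ![D, 0, F], fun x => ?_⟩
            simp only [conic, dotProduct, Fin.sum_univ_three, cons_val, h0]
            ring
        · refine ⟨![1, 0, 0], ![0, D, E], fun x => ?_⟩
          simp only [conic, dotProduct, Fin.sum_univ_three, cons_val, h0]
          ring
      · obtain ⟨l, l', hl⟩ := conic_factor_of_left_ne_zero C B A F E D hC
          (by rw [← h]; unfold disc2; ring)
        refine ⟨![l 2, l 1, l 0], ![l' 2, l' 1, l' 0], fun x => ?_⟩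
        have := hl ![x 2, x 1, x 0]
        simp only [conic, dotProduct, Fin.sum_univ_three, cons_val] at this ⊢
        linear_combination this
    · obtain ⟨l, l', hl⟩ := conic_factor_of_left_ne_zero B A C D F E hB
        (by rw [← h]; unfold disc2; ring)
      refine ⟨![l 1, l 0, l 2], ![l' 1, l' 0, l' 2], fun x => ?_⟩
      have := hl ![x 1, x 0, x 2]
      simp only [conic, dotProduct, Fin.sum_univ_three, cons_val] at this ⊢
      linear_combination this
  · exact conic_factor_of_left_ne_zero A B C D E F hA h

/-- The coefficients of a product of two linear forms. -/
theorem conic_coeffs_of_factor {R : Type*} [CommRing R] {A B C D E F : R} {l l' : Fin 3 → R}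
    (h : ∀ x, conic A B C D E F x = (l ⬝ᵥ x) * (l' ⬝ᵥ x)) :
    A = l 0 * l' 0 ∧ B = l 1 * l' 1 ∧ C = l 2 * l' 2 ∧ D = l 0 * l' 1 + l 1 * l' 0 ∧
      E = l 0 * l' 2 + l 2 * l' 0 ∧ F = l 1 * l' 2 + l 2 * l' 1 := by
  have h1 := h ![1, 0, 0]
  have h2 := h ![0, 1, 0]
  have h3 := h ![0, 0, 1]
  have h4 := h ![1, 1, 0]
  have h5 := h ![1, 0, 1]
  have h6 := h ![0, 1, 1]
  simp only [conic, dotProduct, Fin.sum_univ_three, cons_val] at h1 h2 h3 h4 h5 h6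
  refine ⟨?_, ?_, ?_, ?_, ?_, ?_⟩
  · linear_combination h1
  · linear_combination h2
  · linear_combination h3
  · linear_combination h4 - h1 - h2
  · linear_combination h5 - h1 - h3
  · linear_combination h6 - h2 - h3

/-- A nonzero vector is the first column of a matrix of determinant one. -/
theorem exists_SL2_col {K : Type*} [Field K] (p q : K) (h : p ≠ 0 ∨ q ≠ 0) :
    ∃ M : SpecialLinearGroup (Fin 2) K, M.1 0 0 = p ∧ M.1 1 0 = q := by
  by_cases hp : p = 0
  · have hq : q ≠ 0 := h.resolve_left (not_not.mpr hp)
    exact ⟨⟨!![p, -q⁻¹; q, 0], by simp [det_fin_two, hq]⟩, by simp, by simp⟩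
  · exact ⟨⟨!![p, 0; q, p⁻¹], by simp [det_fin_two, hp]⟩, by simp, by simp⟩

theorem exists_SL3_col {K : Type*} [Field K] (p : Fin 3 → K) (h : p ≠ 0) :
    ∃ M : SpecialLinearGroup (Fin 3) K, ∀ i, M.1 i 0 = p i := by
  by_cases h0 : p 0 = 0
  · by_cases h1 : p 1 = 0
    · have h2 : p 2 ≠ 0 := by
        intro h2
        apply h
        funext i
        fin_cases i <;> simp [h0, h1, h2]
      refine ⟨⟨!![p 0, 1, 0; p 1, 0, 1; p 2, 0, 0] * diagonal ![1, (p 2)⁻¹, 1], ?_⟩, ?_⟩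
      · rw [det_mul, det_diagonal, det_fin_three]
        simp [Fin.prod_univ_three, h2]
      · intro i
        fin_cases i <;> simp
    · refine ⟨⟨!![p 0, 0, 1; p 1, 0, 0; p 2, 1, 0] * diagonal ![1, (p 1)⁻¹, 1], ?_⟩, ?_⟩
      · rw [det_mul, det_diagonal, det_fin_three]
        simp [Fin.prod_univ_three, h1]
      · intro i
        fin_cases i <;> simp
  · refine ⟨⟨!![p 0, 0, 0; p 1, 1, 0; p 2, 0, 1] * diagonal ![1, (p 0)⁻¹, 1], ?_⟩, ?_⟩
    · rw [det_mul, det_diagonal, det_fin_three]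
      simp [Fin.prod_univ_three, h0]
    · intro i
      fin_cases i <;> simp

/-- Value of a binary cubic. -/
def cubicEval {R : Type*} [CommRing R] (k : Fin 4 → R) (x y : R) : R :=
  k 0 * x ^ 3 + k 1 * x ^ 2 * y + k 2 * x * y ^ 2 + k 3 * y ^ 3

theorem exists_cubic_zero (k : Fin 4 → L) :
    ∃ x y : L, (x ≠ 0 ∨ y ≠ 0) ∧ cubicEval k x y = 0 := by
  by_cases ha : k 0 = 0
  · exact ⟨1, 0, by simp, by simp [cubicEval, ha]⟩
  · obtain ⟨x, hx⟩ := exists_cubic_root (k 0) (k 1) (k 2) (k 3) ha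
    exact ⟨x, 1, by simp, by simpa [cubicEval] using hx⟩

/-- A cubic with nonzero discriminant has two independent zeros. -/
theorem exists_two_cubic_zeros (k : Fin 4 → L) (h : disc3 (k 0) (k 1) (k 2) (k 3) ≠ 0) :
    ∃ x y x' y' : L, x * y' - x' * y ≠ 0 ∧ cubicEval k x y = 0 ∧ cubicEval k x' y' = 0 := by
  by_cases ha : k 0 = 0
  · have hb : k 1 ≠ 0 := by
      intro hb
      apply h
      simp [disc3, ha, hb]
    obtain ⟨x, hx⟩ := exists_quadratic_root (k 1) (k 2) (k 3) hb
    refine ⟨1, 0, x, 1, by simp, by simp [cubicEval, ha], ?_⟩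
    simp only [cubicEval]
    linear_combination x ^ 3 * ha + hx
  · obtain ⟨x, hx⟩ := exists_cubic_root (k 0) (k 1) (k 2) (k 3) ha
    obtain ⟨y, hy⟩ := exists_quadratic_root (k 0) (k 1 + k 0 * x) (k 2 + k 1 * x + k 0 * x ^ 2) ha
    refine ⟨x, 1, y, 1, ?_, ?_, ?_⟩
    · intro hxy
      have hxy : y = x := by linear_combination -hxy
      subst hxy
      apply h
      have h2 : k 2 = -(k 0 * y ^ 2 + (k 1 + k 0 * y) * y + k 1 * y + k 0 * y ^ 2) := by
        linear_combination hy
      have h3 : k 3 = -(k 0 * y ^ 3 + k 1 * y ^ 2 + k 2 * y) := by linear_combination hx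
      rw [h3, h2]
      unfold disc3
      ring
    · simp only [cubicEval]
      linear_combination hx
    · simp only [cubicEval]
      linear_combination hx + (y - x) * hy

/-- A cubic with vanishing discriminant has a multiple zero: along every direction the first
two Taylor coefficients vanish there. -/
theorem exists_double_cubic_zero (k : Fin 4 → L) (h : disc3 (k 0) (k 1) (k 2) (k 3) = 0) :
    ∃ x y : L, (x ≠ 0 ∨ y ≠ 0) ∧ cubicEval k x y = 0 ∧
      3 * k 0 * x ^ 2 + 2 * k 1 * x * y + k 2 * y ^ 2 = 0 ∧
      k 1 * x ^ 2 + 2 * k 2 * x * y + 3 * k 3 * y ^ 2 = 0 := by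
  have base : ∀ b c d : L, disc3 0 b c d = 0 → ∃ x y : L, (x ≠ 0 ∨ y ≠ 0) ∧
      b * x ^ 2 * y + c * x * y ^ 2 + d * y ^ 3 = 0 ∧ 2 * b * x * y + c * y ^ 2 = 0 ∧
      b * x ^ 2 + 2 * c * x * y + 3 * d * y ^ 2 = 0 := by
    intro b c d h
    by_cases hb : b = 0
    · exact ⟨1, 0, by simp, by simp, by simp, by simp [hb]⟩
    · obtain ⟨x, hx⟩ := exists_quadratic_root b c d hb
      have hdisc : c ^ 2 - 4 * b * d = 0 := by
        have : b ^ 2 * (c ^ 2 - 4 * b * d) = 0 := by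
          rw [← h]
          unfold disc3
          ring
        exact (mul_eq_zero.mp this).resolve_left (pow_ne_zero 2 hb)
      have hx' : 2 * b * x + c = 0 := by
        apply pow_eq_zero_iff two_ne_zero |>.mp
        linear_combination hdisc + 4 * b * hx
      exact ⟨x, 1, by simp, by linear_combination hx, by linear_combination hx',
        by linear_combination 3 * hx - x * hx'⟩
  by_cases ha : k 0 = 0
  · rw [ha] at h
    obtain ⟨x, y, hxy, h1, h2, h3⟩ := base _ _ _ h
    refine ⟨x, y, hxy, ?_, ?_, h3⟩
    · simp only [cubicEval]
      linear_combination x ^ 3 * ha + h1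
    · linear_combination 3 * x ^ 2 * ha + h2
  · obtain ⟨r, hr⟩ := exists_cubic_root (k 0) (k 1) (k 2) (k 3) ha
    obtain ⟨x, y, hxy, h1, h2, h3⟩ := base (3 * k 0 * r ^ 2 + 2 * k 1 * r + k 2)
      (3 * k 0 * r + k 1) (k 0) (by
        refine Eq.trans ?_ h
        have h3 : k 3 = -(k 0 * r ^ 3 + k 1 * r ^ 2 + k 2 * r) := by linear_combination hr
        rw [h3]
        unfold disc3
        ring)
    refine ⟨r * x + y, x, ?_, ?_, ?_, ?_⟩
    · by_contra! hcon
      obtain ⟨hc1, hc2⟩ := hcon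
      rw [hc2] at hc1 hxy
      simp_all
    · simp only [cubicEval]
      linear_combination h1 + x ^ 3 * hr
    · linear_combination h3
    · linear_combination 3 * x ^ 2 * hr - r * h3 + h2
end AlgClosed

section Unstable

variable {L : Type*} [Field L] [IsAlgClosed L]

/-- A Zariski closed set containing all points `(s ^ kᵢ cᵢ)ᵢ` with `s ≠ 0` contains the limit
point for `s → 0`. -/
theorem IsZariskiClosed.limit_mem {n : ℕ} {K : Type*} [Field K] [Infinite K]
    {S : Set (Fin n → K)} (hS : IsZariskiClosed S) (c : Fin n → K) (k : Fin n → ℕ)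
    (h : ∀ s : K, s ≠ 0 → (fun i => s ^ k i * c i) ∈ S) : (fun i => 0 ^ k i * c i) ∈ S := by
  obtain ⟨P, rfl⟩ := hS
  intro p hp
  have heval_all : ∀ (q : MvPolynomial (Fin n) K) (s : K), Polynomial.eval s
      (MvPolynomial.aeval (fun i => Polynomial.X ^ k i * Polynomial.C (c i)) q)
        = MvPolynomial.eval (fun i => s ^ k i * c i) q := by
    intro q s
    induction q using MvPolynomial.induction_on with
    | C a => simp
    | add p q hp hq => simp only [map_add, Polynomial.eval_add, hp, hq]
    | mul_X p i hp =>
      rw [map_mul, map_mul, Polynomial.eval_mul, hp]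
      simp [mul_comm (c i)]
  obtain ⟨f, hf⟩ : ∃ f : Polynomial K,
      f = MvPolynomial.aeval (fun i => Polynomial.X ^ k i * Polynomial.C (c i)) p := ⟨_, rfl⟩
  have heval : ∀ s : K, f.eval s = MvPolynomial.eval (fun i => s ^ k i * c i) p := by
    intro s
    rw [hf, heval_all]
  have hf0 : f = 0 := by
    apply Polynomial.eq_zero_of_infinite_isRoot
    refine Set.Infinite.mono (s := {0}ᶜ) ?_ (Set.finite_singleton 0).infinite_compl
    intro s hs
    change f.eval s = 0
    rw [heval]
    exact h s hs p hp
  rw [← heval, hf0, Polynomial.eval_zero]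

/-- A one-parameter subgroup along which an orbit point has a limit obstructs stability. -/
theorem not_stable4_of_limit {c c' : Fin 14 → L} {g : Group4 L} (hg : IsImage g c c')
    (lam : Lˣ → Group4 L) (hinj : Function.Injective lam) (k : Fin 14 → ℕ)
    (hlam : ∀ (s : Lˣ) (d : Fin 14 → L), (∀ i, c' i = 0 → d i = 0) →
      IsImage (lam s) d (fun i => (s : L) ^ k i * d i)) : ¬ Stable4 c := by
  have : Infinite L := IsAlgClosed.instInfinite
  rintro ⟨hclosed, hfin⟩
  simp only [toV4_eq_act4_iff] at hclosed
  have hfin' : {k : Group4 L | IsImage k c c}.Finite := by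
    simpa only [eq_comm (b := toV4 c), toV4_eq_act4_iff] using hfin
  obtain ⟨h, hh⟩ := hclosed.limit_mem c' k fun s hs =>
    ⟨g * lam (Units.mk0 s hs), hg.trans (hlam (Units.mk0 s hs) c' fun i hi => hi)⟩
  have hfin0 := finite_stabilizer_of_isImage hh hfin'
  have hsub : Set.range lam ⊆
      {k' : Group4 L | IsImage k' (fun i => 0 ^ k i * c' i) (fun i => 0 ^ k i * c' i)} := by
    rintro _ ⟨s, rfl⟩
    have := hlam s (fun i => 0 ^ k i * c' i) (fun i hi => by simp [hi])
    have e : (fun i => (s : L) ^ k i * (0 ^ k i * c' i)) = fun i => 0 ^ k i * c' i := by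
      funext i
      rcases Nat.eq_zero_or_pos (k i) with hi | hi
      · simp [hi]
      · simp [hi.ne']
    rw [e] at this
    exact this
  have : Infinite Lˣ := by
    have : Infinite ({0}ᶜ : Set L) := (Set.finite_singleton 0).infinite_compl.to_subtype
    exact Infinite.of_injective (fun x : ({0}ᶜ : Set L) => Units.mk0 x.1 x.2)
      fun x y hxy => Subtype.ext (congrArg Units.val hxy)
  exact Set.infinite_range_of_injective hinj (hfin0.subset hsub)

/-- The diagonal one-parameter subgroups used for destabilization. -/
def diagonalGroup4 {K : Type*} [Field K] (a b t : Kˣ) : Group4 K :=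
  (⟨diagonal ![(a : K)⁻¹, a], by simp [det_diagonal, Fin.prod_univ_two]⟩,
    ⟨diagonal ![((b : K) ^ 2)⁻¹, b, b], by
      have := b.ne_zero
      simp [det_diagonal, Fin.prod_univ_three]
      field_simp⟩, t)

theorem evalF_diagonalGroup4 {K : Type*} [Field K] (a b t : Kˣ) (c : Fin 14 → K) (u : Fin 2 → K)
    (x : Fin 3 → K) : evalF c ((diagonalGroup4 a b t).1.1 *ᵥ u) ((diagonalGroup4 a b t).2.1.1 *ᵥ x)
      = evalF c ![(a : K)⁻¹ * u 0, a * u 1] ![((b : K) ^ 2)⁻¹ * x 0, b * x 1, b * x 2] := by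
  congr 1
  · funext i
    fin_cases i <;> simp [diagonalGroup4, mulVec_diagonal]
  · funext i
    fin_cases i <;> simp [diagonalGroup4, mulVec_diagonal]

theorem evalG_diagonalGroup4 {K : Type*} [Field K] (a b t : Kˣ) (c : Fin 14 → K)
    (u : Fin 2 → K) :
    evalG c ((diagonalGroup4 a b t).1.1 *ᵥ u) = evalG c ![(a : K)⁻¹ * u 0, a * u 1] := by
  congr 1
  funext i
  fin_cases i <;> simp [diagonalGroup4, mulVec_diagonal]

/-- The root of `G` is a root of `disc₂ F`, in normalized coordinates. -/
theorem not_stable4_of_common_root {c c' : Fin 14 → L} {g : Group4 L} (hg : IsImage g c c')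
    (h0 : c' 0 = 0) (h6 : c' 6 = 0) (h8 : c' 8 = 0) (h12 : c' 12 = 0) : ¬ Stable4 c := by
  refine not_stable4_of_limit hg (fun s => diagonalGroup4 (s ^ 3) s s⁻¹) ?_
    ![0, 0, 0, 6, 0, 6, 0, 3, 0, 3, 0, 6, 0, 0] ?_
  · intro s s' hss
    have := congrArg (fun g : Group4 L => g.2.2) hss
    simpa [diagonalGroup4] using this
  · intro s d hd
    have hs := s.ne_zero
    refine ⟨fun u x => ?_, fun u => ?_⟩
    · rw [evalF_diagonalGroup4]
      simp only [evalF, conic, cons_val, diagonalGroup4, hd 0 h0, hd 6 h6, hd 8 h8,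
        Units.val_inv_eq_inv_val, Units.val_pow_eq_pow_val]
      field_simp
      ring
    · rw [evalG_diagonalGroup4]
      simp only [evalG, cons_val, diagonalGroup4, hd 12 h12,
        Units.val_inv_eq_inv_val, Units.val_pow_eq_pow_val]
      field_simp
      ring

/-- The cubic `disc₂ F` has a multiple root, in normalized coordinates. -/
theorem not_stable4_of_double_root {c c' : Fin 14 → L} {g : Group4 L} (hg : IsImage g c c')
    (h0 : c' 0 = 0) (h1 : c' 1 = 0) (h6 : c' 6 = 0) (h8 : c' 8 = 0) : ¬ Stable4 c := by
  refine not_stable4_of_limit hg (fun s => diagonalGroup4 (s ^ 3) (s ^ 2) s) ?_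
    ![0, 0, 0, 6, 0, 6, 0, 0, 0, 0, 0, 6, 0, 6] ?_
  · intro s s' hss
    exact congrArg (fun g : Group4 L => g.2.2) hss
  · intro s d hd
    have hs := s.ne_zero
    refine ⟨fun u x => ?_, fun u => ?_⟩
    · rw [evalF_diagonalGroup4]
      simp only [evalF, conic, cons_val, diagonalGroup4, hd 0 h0, hd 1 h1, hd 6 h6, hd 8 h8,
        Units.val_pow_eq_pow_val]
      field_simp
      ring
    · rw [evalG_diagonalGroup4]
      simp only [evalG, cons_val, diagonalGroup4, Units.val_pow_eq_pow_val]
      field_simp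

/-- A conic meets every line of the projective plane. -/
theorem exists_conic_zero_on_line (A B C D E F : L) (n : Fin 3 → L) :
    ∃ p : Fin 3 → L, p ≠ 0 ∧ n ⬝ᵥ p = 0 ∧ conic A B C D E F p = 0 := by
  have span : ∀ p q : Fin 3 → L, n ⬝ᵥ p = 0 → n ⬝ᵥ q = 0 →
      (∀ x y : L, x • p + y • q = 0 → x = 0 ∧ y = 0) →
      ∃ p : Fin 3 → L, p ≠ 0 ∧ n ⬝ᵥ p = 0 ∧ conic A B C D E F p = 0 := by
    intro p q hp hq hpq
    obtain ⟨x, y, hxy, h⟩ := exists_binary_quadratic_zero (conic A B C D E F p)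
      (conic A B C D E F (p + q) - conic A B C D E F p - conic A B C D E F q)
      (conic A B C D E F q)
    refine ⟨x • p + y • q, fun h0 => ?_, ?_, ?_⟩
    · obtain ⟨h1, h2⟩ := hpq x y h0
      simp [h1, h2] at hxy
    · simp [dotProduct_add, hp, hq]
    · rw [← h]
      simp only [conic, Pi.add_apply, Pi.smul_apply, smul_eq_mul]
      ring
  by_cases h0 : n 0 = 0
  · by_cases h1 : n 1 = 0
    · refine span ![1, 0, 0] ![0, 1, 0] (by simp [dotProduct, Fin.sum_univ_three, h0])
        (by simp [dotProduct, Fin.sum_univ_three, h1]) fun x y hxy => ?_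
      exact ⟨by simpa using congrFun hxy 0, by simpa using congrFun hxy 1⟩
    · refine span ![n 1, -n 0, 0] ![0, -n 2, n 1]
        (by simp [dotProduct, Fin.sum_univ_three]; ring)
        (by simp [dotProduct, Fin.sum_univ_three]; ring) fun x y hxy => ?_
      exact ⟨by simpa [h1] using congrFun hxy 0, by simpa [h1] using congrFun hxy 2⟩
  · refine span ![-n 1, n 0, 0] ![-n 2, 0, n 0]
        (by simp [dotProduct, Fin.sum_univ_three]; ring)
        (by simp [dotProduct, Fin.sum_univ_three]; ring) fun x y hxy => ?_
    exact ⟨by simpa [h0] using congrFun hxy 1, by simpa [h0] using congrFun hxy 2⟩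

/-- Two lines have a common point, which may be chosen on a given conic if the conic contains
their cross product. -/
theorem exists_common_point (A B C D E F : L) (l l' : Fin 3 → L) :
    ∃ p : Fin 3 → L, p ≠ 0 ∧ l ⬝ᵥ p = 0 ∧ l' ⬝ᵥ p = 0 ∧
      (conic A B C D E F (l ⨯₃ l') = 0 → conic A B C D E F p = 0) := by
  by_cases hcross : l ⨯₃ l' = 0
  · by_cases hl : l = 0
    · obtain ⟨p, hp, hp', hpc⟩ := exists_conic_zero_on_line A B C D E F l'
      exact ⟨p, hp, by simp [hl], hp', fun _ => hpc⟩
    · obtain ⟨p, hp, hp', hpc⟩ := exists_conic_zero_on_line A B C D E F l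
      refine ⟨p, hp, hp', ?_, fun _ => hpc⟩
      have e0 := congrFun hcross 0
      have e1 := congrFun hcross 1
      have e2 := congrFun hcross 2
      simp [cross_apply] at e0 e1 e2
      obtain ⟨i, hi⟩ := Function.ne_iff.mp hl
      refine (mul_eq_zero.mp ?_).resolve_left hi
      simp only [dotProduct, Fin.sum_univ_three] at hp' ⊢
      fin_cases i
      · change l 0 * (l' 0 * p 0 + l' 1 * p 1 + l' 2 * p 2) = 0
        linear_combination l' 0 * hp' + p 1 * e2 - p 2 * e1
      · change l 1 * (l' 0 * p 0 + l' 1 * p 1 + l' 2 * p 2) = 0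
        linear_combination l' 1 * hp' - p 0 * e2 + p 2 * e0
      · change l 2 * (l' 0 * p 0 + l' 1 * p 1 + l' 2 * p 2) = 0
        linear_combination l' 2 * hp' + p 0 * e1 - p 1 * e0
  · exact ⟨_, hcross, dot_self_cross l l', dot_cross_self l l', id⟩

/-- The differential of `disc₂`. -/
def disc2Polar {R : Type*} [CommRing R] (A B C D E F A' B' C' D' E' F' : R) : R :=
  4 * (A' * B * C + A * B' * C + A * B * C') + D' * E * F + D * E' * F + D * E * F'
    - A' * F ^ 2 - 2 * A * F * F' - B' * E ^ 2 - 2 * B * E * E' - C' * D ^ 2 - 2 * C * D * D'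

theorem disc2Polar_of_factor {R : Type*} [CommRing R] (l l' : Fin 3 → R) (A B C D E F : R) :
    disc2Polar (l 0 * l' 0) (l 1 * l' 1) (l 2 * l' 2) (l 0 * l' 1 + l 1 * l' 0)
      (l 0 * l' 2 + l 2 * l' 0) (l 1 * l' 2 + l 2 * l' 1) A B C D E F
      = -conic A B C D E F (l ⨯₃ l') := by
  simp only [disc2Polar, conic, cross_apply, cons_val]
  ring

theorem disc2Polar_eq_cubic_deriv {K : Type*} [Field K] (c : Fin 14 → K) (x y : K)
    (w : Fin 2 → K) :
    disc2Polar (c 0 * x + c 1 * y) (c 2 * x + c 3 * y) (c 4 * x + c 5 * y) (c 6 * x + c 7 * y)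
      (c 8 * x + c 9 * y) (c 10 * x + c 11 * y) (c 0 * w 0 + c 1 * w 1) (c 2 * w 0 + c 3 * w 1)
      (c 4 * w 0 + c 5 * w 1) (c 6 * w 0 + c 7 * w 1) (c 8 * w 0 + c 9 * w 1)
      (c 10 * w 0 + c 11 * w 1) =
    (3 * cubicCoeffs c 0 * x ^ 2 + 2 * cubicCoeffs c 1 * x * y + cubicCoeffs c 2 * y ^ 2) * w 0
      + (cubicCoeffs c 1 * x ^ 2 + 2 * cubicCoeffs c 2 * x * y
        + 3 * cubicCoeffs c 3 * y ^ 2) * w 1 := by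
  simp only [disc2Polar, cubicCoeffs, cons_val]
  ring

/-- At a root `u` of `disc₂ F` one can choose coordinates in which `F(u, ·)` is singular at the
first basis vector, and moreover `F` vanishes there if the root is multiple. -/
theorem exists_image_at_root (c : Fin 14 → L) (x y : L) (hxy : x ≠ 0 ∨ y ≠ 0)
    (h : cubicEval (cubicCoeffs c) x y = 0) :
    ∃ (g : Group4 L) (c' : Fin 14 → L), IsImage g c c' ∧ c' 0 = 0 ∧ c' 6 = 0 ∧ c' 8 = 0 ∧
      (evalG c ![x, y] = 0 → c' 12 = 0) ∧
      (3 * cubicCoeffs c 0 * x ^ 2 + 2 * cubicCoeffs c 1 * x * y + cubicCoeffs c 2 * y ^ 2 = 0 →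
        cubicCoeffs c 1 * x ^ 2 + 2 * cubicCoeffs c 2 * x * y + 3 * cubicCoeffs c 3 * y ^ 2 = 0 →
        c' 1 = 0) := by
  obtain ⟨A, hA0, hA1⟩ := exists_SL2_col x y hxy
  have hD : evalD c ![x, y] = 0 := by
    rw [evalD_eq_cubic, ← h]
    simp [cubicEval]
  obtain ⟨l, l', hl⟩ := conic_factor _ _ _ _ _ _ hD
  have hcoef := conic_coeffs_of_factor hl
  simp only [cons_val] at hcoef
  let w : Fin 2 → L := ![A.1 0 1, A.1 1 1]
  obtain ⟨p, hp, hlp, hlp', hpc⟩ := exists_common_point (c 0 * w 0 + c 1 * w 1)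
    (c 2 * w 0 + c 3 * w 1) (c 4 * w 0 + c 5 * w 1) (c 6 * w 0 + c 7 * w 1)
    (c 8 * w 0 + c 9 * w 1) (c 10 * w 0 + c 11 * w 1) l l'
  obtain ⟨B, hB⟩ := exists_SL3_col p hp
  obtain ⟨c', hc'⟩ := exists_isImage (A, B, 1) c
  have hu : A.1 *ᵥ ![1, 0] = ![x, y] := by simp [Matrix.mulVec_fin_two, hA0, hA1]
  have hw : A.1 *ᵥ ![0, 1] = w := by simp [Matrix.mulVec_fin_two, w]
  have hBe : B.1 *ᵥ ![1, 0, 0] = p := by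
    funext i
    simp [mulVec, dotProduct, Fin.sum_univ_three, hB]
  have hF : ∀ v, evalF c' ![1, 0] v = (l ⬝ᵥ (B.1 *ᵥ v)) * (l' ⬝ᵥ (B.1 *ᵥ v)) := by
    intro v
    rw [hc'.1, ← hl]
    simp [hu, evalF]
  have hsum : ∀ v, evalF c' ![1, 0] (![1, 0, 0] + v) = evalF c' ![1, 0] v := by
    intro v
    rw [hF, hF, mulVec_add, hBe, dotProduct_add, dotProduct_add, hlp, hlp', zero_add, zero_add]
  have h0 : c' 0 = 0 := by
    have := hF ![1, 0, 0]
    rw [hBe, hlp, zero_mul] at this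
    simpa [evalF, conic] using this
  refine ⟨_, c', hc', h0, ?_, ?_, fun hG => ?_, fun h2 h3 => ?_⟩
  · have := hsum ![0, 1, 0]
    simpa [evalF, conic, h0] using this
  · have := hsum ![0, 0, 1]
    simpa [evalF, conic, h0] using this
  · have := hc'.2 ![1, 0]
    rw [show (A, B, (1 : Lˣ)).1.1 *ᵥ ![1, 0] = ![x, y] from hu, hG, mul_zero] at this
    simpa [evalG] using this
  · have hcp : evalF c w p = 0 := by
      apply hpc
      obtain ⟨e1, e2, e3, e4, e5, e6⟩ := hcoef
      have key : evalF c w (l ⨯₃ l') =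
          -((3 * cubicCoeffs c 0 * x ^ 2 + 2 * cubicCoeffs c 1 * x * y
              + cubicCoeffs c 2 * y ^ 2) * w 0
            + (cubicCoeffs c 1 * x ^ 2 + 2 * cubicCoeffs c 2 * x * y
              + 3 * cubicCoeffs c 3 * y ^ 2) * w 1) := by
        rw [← disc2Polar_eq_cubic_deriv, e1, e2, e3, e4, e5, e6, disc2Polar_of_factor, neg_neg,
          evalF]
      have : evalF c w (l ⨯₃ l') = 0 := by rw [key, h2, h3]; ring
      exact this
    have := hc'.1 ![0, 1] ![1, 0, 0]
    rw [show (A, B, (1 : Lˣ)).1.1 *ᵥ ![0, 1] = w from hw,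
      show (A, B, (1 : Lˣ)).2.1.1 *ᵥ ![1, 0, 0] = p from hBe, hcp, mul_zero] at this
    simpa [evalF, conic] using this

theorem not_stable4_of_Delta4_eq_zero (c : Fin 14 → L) (h : Delta4 c = 0) : ¬ Stable4 c := by
  have common : ∀ x y : L, (x ≠ 0 ∨ y ≠ 0) → cubicEval (cubicCoeffs c) x y = 0 →
      evalG c ![x, y] = 0 → ¬ Stable4 c := by
    intro x y hxy hD hG
    obtain ⟨g, c', hg, h0, h6, h8, h12, -⟩ := exists_image_at_root c x y hxy hD
    exact not_stable4_of_common_root hg h0 h6 h8 (h12 hG)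
  rw [Delta4_eq] at h
  rcases mul_eq_zero.mp h with h | h
  · obtain ⟨x, y, hxy, h1, h2, h3⟩ := exists_double_cubic_zero _ h
    obtain ⟨g, c', hg, h0, h6, h8, -, h1⟩ := exists_image_at_root c x y hxy h1
    exact not_stable4_of_double_root hg h0 (h1 h2 h3) h6 h8
  · have hD : cubicEval (cubicCoeffs c) (c 13) (-c 12) = 0 := by
      have := pow_eq_zero_iff two_ne_zero |>.mp h
      rw [evalD_eq_cubic] at this
      simpa [cubicEval] using this
    by_cases hG : c 13 ≠ 0 ∨ -c 12 ≠ 0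
    · exact common _ _ hG hD (by simp [evalG]; ring)
    · obtain ⟨x, y, hxy, hD⟩ := exists_cubic_zero (cubicCoeffs c)
      simp only [not_or, not_not, neg_eq_zero] at hG
      exact common x y hxy hD (by simp [evalG, hG.1, hG.2])

end Unstable

section NormalForm

variable {L : Type*} [Field L]

/-- The form `F = U Y (X - Z) + W Z (X - Y)`, whose base points are in general position, together
with `G = m U + n W`. -/
def baseVec (m n : L) : Fin 14 → L := ![0, 0, 0, 0, 0, 0, 1, 0, 0, 1, -1, -1, m, n]

theorem evalF_baseVec (m n : L) (u : Fin 2 → L) (x : Fin 3 → L) :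
    evalF (baseVec m n) u x = u 0 * (x 1 * (x 0 - x 2)) + u 1 * (x 2 * (x 0 - x 1)) := by
  simp only [evalF, conic, baseVec, cons_val]
  ring

theorem evalG_baseVec (m n : L) (u : Fin 2 → L) :
    evalG (baseVec m n) u = m * u 0 + n * u 1 := by
  simp only [evalG, baseVec, cons_val]

theorem exists_isImage_baseVec_of_scaling [IsAlgClosed L] {c : Fin 14 → L} {k₁ k₂ : L}
    (hk₁ : k₁ ≠ 0) (hk₂ : k₂ ≠ 0) {N : Matrix (Fin 3) (Fin 3) L} (hN : N.det ≠ 0)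
    (h : ∀ u x, evalF c u x = evalF (baseVec 0 0) ![k₁ * u 0, k₂ * u 1] (N *ᵥ x)) :
    ∃ (g : Group4 L) (m n : L), IsImage g (baseVec m n) c := by
  obtain ⟨ν, hν⟩ := IsAlgClosed.exists_pow_nat_eq N.det (n := 3) (by norm_num)
  obtain ⟨μ, hμ⟩ := IsAlgClosed.exists_pow_nat_eq (k₁ * k₂) (n := 2) (by norm_num)
  have hν0 : ν ≠ 0 := by
    rintro rfl
    exact hN (by simpa using hν.symm)
  have hμ0 : μ ≠ 0 := by
    rintro rfl
    exact mul_ne_zero hk₁ hk₂ (by simpa using hμ.symm)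
  let A : SpecialLinearGroup (Fin 2) L := ⟨diagonal ![k₁ / μ, k₂ / μ], by
    simp only [det_diagonal, Fin.prod_univ_two, cons_val]
    field_simp
    exact hμ.symm⟩
  let B : SpecialLinearGroup (Fin 3) L := ⟨ν⁻¹ • N, by
    rw [det_smul, ← hν, Fintype.card_fin]
    field_simp⟩
  have hA : ∀ u, A.1 *ᵥ u = ![k₁ / μ * u 0, k₂ / μ * u 1] := by
    intro u
    funext i
    fin_cases i <;> simp [A, mulVec_diagonal]
  have hB : ∀ x, B.1 *ᵥ x = ν⁻¹ • (N *ᵥ x) := fun x => smul_mulVec _ _ _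
  let t : Lˣ := (Units.mk0 (μ * ν ^ 2) (by positivity))⁻¹
  refine ⟨(A, B, t), c 12 * μ / (k₁ * t ^ 3), c 13 * μ / (k₂ * t ^ 3), fun u x => ?_, fun u => ?_⟩
  · simp only [h, hA, hB, evalF_baseVec, cons_val, Pi.smul_apply, smul_eq_mul, t,
      Units.val_inv_eq_inv_val, Units.val_mk0]
    field_simp
  · have := t.ne_zero
    rw [evalG_baseVec, hA]
    simp only [evalG, cons_val]
    field_simp

/-- The determinant with rows `p`, `q`, `r`. -/
def bracket {R : Type*} [CommRing R] (p q r : Fin 3 → R) : R :=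
  p 0 * (q 1 * r 2 - q 2 * r 1) - p 1 * (q 0 * r 2 - q 2 * r 0) + p 2 * (q 0 * r 1 - q 1 * r 0)

theorem exists_isImage_baseVec_of_factors [IsAlgClosed L] {c : Fin 14 → L}
    {l₁ l₂ l₃ l₄ : Fin 3 → L}
    (h : ∀ u x, evalF c u x = u 0 * ((l₁ ⬝ᵥ x) * (l₂ ⬝ᵥ x)) + u 1 * ((l₃ ⬝ᵥ x) * (l₄ ⬝ᵥ x)))
    (h₁₂₃ : bracket l₁ l₂ l₃ ≠ 0) (h₁₂₄ : bracket l₁ l₂ l₄ ≠ 0) (h₁₃₄ : bracket l₁ l₃ l₄ ≠ 0)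
    (h₂₃₄ : bracket l₂ l₃ l₄ ≠ 0) : ∃ (g : Group4 L) (m n : L), IsImage g (baseVec m n) c := by
  obtain ⟨a, ha⟩ : ∃ a, a = bracket l₂ l₃ l₄ / bracket l₁ l₂ l₃ := ⟨_, rfl⟩
  obtain ⟨b, hb⟩ : ∃ b, b = -(bracket l₁ l₃ l₄ / bracket l₁ l₂ l₃) := ⟨_, rfl⟩
  obtain ⟨d, hd⟩ : ∃ d, d = bracket l₁ l₂ l₄ / bracket l₁ l₂ l₃ := ⟨_, rfl⟩
  have ha0 : a ≠ 0 := ha ▸ div_ne_zero h₂₃₄ h₁₂₃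
  have hb0 : b ≠ 0 := hb ▸ neg_ne_zero.mpr (div_ne_zero h₁₃₄ h₁₂₃)
  have hd0 : d ≠ 0 := hd ▸ div_ne_zero h₁₂₄ h₁₂₃
  have hl₄ : ∀ i, l₄ i = a * l₁ i + b * l₂ i + d * l₃ i := by
    intro i
    rw [ha, hb, hd]
    field_simp
    fin_cases i <;> simp [bracket] <;> ring
  refine exists_isImage_baseVec_of_scaling (k₁ := -(a * b)⁻¹) (k₂ := d⁻¹)
    (N := of ![b • l₂ + d • l₃, -a • l₁, d • l₃]) (by simp [ha0, hb0]) (by simp [hd0]) ?_ ?_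
  · have : (of ![b • l₂ + d • l₃, -a • l₁, d • l₃]).det = a * b * d * bracket l₁ l₂ l₃ := by
      simp [det_fin_three, bracket]
      ring
    rw [this]
    simp [ha0, hb0, hd0, h₁₂₃]
  · intro u x
    rw [h, evalF_baseVec]
    simp only [dotProduct, mulVec, Fin.sum_univ_three, of_apply, cons_val, Pi.add_apply,
      Pi.smul_apply, smul_eq_mul, hl₄]
    field_simp
    ring

/-- Every vector with nonvanishing `Δ₄` lies in the orbit of a vector of the slice. -/
theorem exists_isImage_baseVec [IsAlgClosed L] (c : Fin 14 → L) (hc : Delta4 c ≠ 0) :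
    ∃ (g : Group4 L) (m n : L), IsImage g (baseVec m n) c := by
  have : Infinite L := IsAlgClosed.instInfinite
  have hdisc := hc
  rw [Delta4_eq] at hdisc
  obtain ⟨x, y, x', y', hne, h₁, h₂⟩ := exists_two_cubic_zeros _ (left_ne_zero_of_mul hdisc)
  let A : SpecialLinearGroup (Fin 2) L :=
    ⟨!![x, x' / (x * y' - x' * y); y, y' / (x * y' - x' * y)], by
      rw [det_fin_two_of]
      field_simp⟩
  obtain ⟨d, hd⟩ := exists_isImage (A, 1, 1) c
  have hA₁ : A.1 *ᵥ ![1, 0] = ![x, y] := by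
    funext i
    fin_cases i <;> simp [A, mulVec, dotProduct]
  have hA₂ : A.1 *ᵥ ![0, 1] = ![x' / (x * y' - x' * y), y' / (x * y' - x' * y)] := by
    funext i
    fin_cases i <;> simp [A, mulVec, dotProduct]
  have hD₁ : evalD d ![1, 0] = 0 := by
    rw [hd.evalD]
    change _ * evalD c (A.1 *ᵥ ![1, 0]) = 0
    rw [hA₁, evalD_eq_cubic]
    simpa [cubicEval] using h₁
  have hD₂ : evalD d ![0, 1] = 0 := by
    rw [hd.evalD]
    change _ * evalD c (A.1 *ᵥ ![0, 1]) = 0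
    rw [hA₂, evalD_eq_cubic]
    simp only [cubicEval] at h₂
    simp only [cons_val]
    field_simp
    linear_combination h₂
  have hcub₀ : cubicCoeffs d 0 = 0 := by simpa [evalD_eq_cubic] using hD₁
  have hcub₃ : cubicCoeffs d 3 = 0 := by simpa [evalD_eq_cubic] using hD₂
  have hdisc' : Delta4 d ≠ 0 := by rwa [hd.invariants.2.2]
  rw [Delta4_eq] at hdisc'
  have hβγ : cubicCoeffs d 1 ≠ 0 ∧ cubicCoeffs d 2 ≠ 0 := by
    have := left_ne_zero_of_mul hdisc'
    constructor <;> intro h0 <;> apply this <;> simp [disc3, h0, hcub₀, hcub₃]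
  obtain ⟨l₁, l₂, hl⟩ := conic_factor _ _ _ _ _ _ hD₁
  obtain ⟨l₃, l₄, hl'⟩ := conic_factor _ _ _ _ _ _ hD₂
  have hF : ∀ u x, evalF d u x
      = u 0 * ((l₁ ⬝ᵥ x) * (l₂ ⬝ᵥ x)) + u 1 * ((l₃ ⬝ᵥ x) * (l₄ ⬝ᵥ x)) := by
    intro u x
    rw [← hl, ← hl']
    simp only [evalF, conic, cons_val]
    ring
  obtain ⟨e0, e2, e4, e6, e8, e10⟩ := conic_coeffs_of_factor hl
  obtain ⟨e1, e3, e5, e7, e9, e11⟩ := conic_coeffs_of_factor hl'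
  simp only [cons_val, mul_one, mul_zero, add_zero, zero_add] at e0 e1 e2 e3 e4 e5 e6 e7 e8 e9 e10 e11
  have hβ : cubicCoeffs d 1 = -(bracket l₁ l₂ l₃ * bracket l₁ l₂ l₄) := by
    simp only [cubicCoeffs, cons_val, e0, e1, e2, e3, e4, e5, e6, e7, e8, e9, e10, e11, bracket]
    ring
  have hγ : cubicCoeffs d 2 = -(bracket l₁ l₃ l₄ * bracket l₂ l₃ l₄) := by
    simp only [cubicCoeffs, cons_val, e0, e1, e2, e3, e4, e5, e6, e7, e8, e9, e10, e11, bracket]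
    ring
  rw [hβ, hγ, neg_ne_zero, neg_ne_zero, mul_ne_zero_iff, mul_ne_zero_iff] at hβγ
  obtain ⟨g, m, n, hg⟩ :=
    exists_isImage_baseVec_of_factors hF hβγ.1.1 hβγ.1.2 hβγ.2.1 hβγ.2.2
  exact ⟨_, m, n, hg.trans hd.symm⟩

end NormalForm

section Slice

variable {L : Type*} [Field L]

theorem exists_isImage_baseVec_rotate (m n : L) :
    ∃ g : Group4 L, IsImage g (baseVec m n) (baseVec (n - m) (-m)) := by
  refine ⟨(⟨!![-1, -1; 1, 0], by simp [det_fin_two]⟩,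
    ⟨!![0, 1, 0; 0, 0, 1; 1, 0, 0], by simp [det_fin_three]⟩, 1), fun u x => ?_, fun u => ?_⟩
  · simp only [evalF_baseVec, mulVec, dotProduct, Fin.sum_univ_two, Fin.sum_univ_three, of_apply,
      cons_val, Units.val_one, inv_one]
    ring
  · simp only [evalG_baseVec, mulVec, dotProduct, Fin.sum_univ_two, of_apply, cons_val,
      Units.val_one]
    ring

theorem exists_isImage_baseVec_swap [IsAlgClosed L] (m n : L) :
    ∃ g : Group4 L, IsImage g (baseVec m n) (baseVec n m) := by
  obtain ⟨ζ, hζ⟩ := IsAlgClosed.exists_pow_nat_eq (-1 : L) (n := 2) (by norm_num)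
  have hζ0 : ζ ≠ 0 := by
    rintro rfl
    simp at hζ
  refine ⟨(⟨!![0, ζ; ζ, 0], by rw [det_fin_two_of]; linear_combination -hζ⟩,
    ⟨!![-1, 0, 0; 0, 0, -1; 0, -1, 0], by simp [det_fin_three]⟩, Units.mk0 ζ hζ0),
    fun u x => ?_, fun u => ?_⟩
  · simp only [evalF_baseVec, mulVec, dotProduct, Fin.sum_univ_two, Fin.sum_univ_three, of_apply,
      cons_val, Units.val_mk0]
    field_simp
    ring
  · simp only [evalG_baseVec, mulVec, dotProduct, Fin.sum_univ_two, of_apply, cons_val,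
      Units.val_mk0]
    linear_combination -(m * u 1 + n * u 0) * (ζ ^ 2 - 1) * hζ

theorem v4QuarticCoeffs_baseVec (m n : L) :
    v4QuarticCoeffs (baseVec m n) = ![0, -m, -(m + n), -n, 0] := by
  funext i
  fin_cases i <;> simp [v4QuarticCoeffs, baseVec]; ring

theorem invariants_baseVec (m n : L) :
    quarticI (v4QuarticCoeffs (baseVec m n)) = m ^ 2 - m * n + n ^ 2 ∧
    quarticJ (v4QuarticCoeffs (baseVec m n)) = -((m + n) * (2 * m - n) * (m - 2 * n)) ∧
    Delta4 (baseVec m n) = (m * n * (m - n)) ^ 2 := by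
  rw [Delta4, v4QuarticCoeffs_baseVec]
  simp only [quarticI, quarticJ, disc4, cons_val]
  refine ⟨?_, ?_, ?_⟩ <;> ring

/-- Two triples with the same elementary symmetric functions agree up to a permutation. -/
theorem eq_perm_of_symmetric {x y z x' y' z' : L} (h₁ : x' + y' + z' = x + y + z)
    (h₂ : x' * y' + y' * z' + z' * x' = x * y + y * z + z * x) (h₃ : x' * y' * z' = x * y * z) :
    (x' = x ∧ y' = y) ∨ (x' = y ∧ y' = z) ∨ (x' = z ∧ y' = x) ∨ (x' = y ∧ y' = x) ∨
      (x' = x ∧ y' = z) ∨ (x' = z ∧ y' = y) := by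
  have root : (x' - x) * ((x' - y) * (x' - z)) = 0 := by
    linear_combination x' ^ 2 * h₁ - x' * h₂ + h₃
  have root' : (y' - x) * ((y' - y) * (y' - z)) = 0 := by
    linear_combination y' ^ 2 * h₁ - y' * h₂ + h₃
  have quad : y' ^ 2 + y' * x' + x' ^ 2 - (x + y + z) * (y' + x') + (x * y + y * z + z * x) = 0 := by
    linear_combination -h₂ + (x' + y') * h₁
  simp only [mul_eq_zero, sub_eq_zero] at root root'
  rcases root with rfl | rfl | rfl
  · have : (y' - y) * (y' - z) = 0 := by linear_combination quad
    simp only [mul_eq_zero, sub_eq_zero] at this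
    tauto
  · have : (y' - x) * (y' - z) = 0 := by linear_combination quad
    simp only [mul_eq_zero, sub_eq_zero] at this
    tauto
  · have : (y' - x) * (y' - y) = 0 := by linear_combination quad
    simp only [mul_eq_zero, sub_eq_zero] at this
    tauto

/-- The invariants separate the orbits of the slice. -/
theorem exists_isImage_baseVec_of_invariants [IsAlgClosed L] {m n m' n' : L}
    (hI : m' ^ 2 - m' * n' + n' ^ 2 = m ^ 2 - m * n + n ^ 2)
    (hJ : (m' + n') * (2 * m' - n') * (m' - 2 * n') = (m + n) * (2 * m - n) * (m - 2 * n))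
    (hΔ : (m' * n' * (m' - n')) ^ 2 = (m * n * (m - n)) ^ 2) :
    ∃ g : Group4 L, IsImage g (baseVec m n) (baseVec m' n') := by
  have hlist : (m' = m ∧ n' = n) ∨ (m' = n - m ∧ n' = -m) ∨ (m' = -n ∧ n' = m - n) ∨
      (m' = n ∧ n' = m) ∨ (m' = -m ∧ n' = n - m) ∨ (m' = m - n ∧ n' = -n) := by
    have hodd : (m + n) * (2 * m - n) * (m - 2 * n) = -((m + n) * (2 * m - n) * (m - 2 * n)) →
        (2 : L) = 0 ∨ n = -m ∨ n = 2 * m ∨ m = 2 * n := by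
      intro h
      have : 2 * ((m + n) * ((2 * m - n) * (m - 2 * n))) = 0 := by linear_combination h
      rcases mul_eq_zero.mp this with h | h
      · exact .inl h
      rcases mul_eq_zero.mp h with h | h
      · exact .inr (.inl (by linear_combination h))
      rcases mul_eq_zero.mp h with h | h
      · exact .inr (.inr (.inl (by linear_combination -h)))
      · exact .inr (.inr (.inr (by linear_combination h)))
    rcases sq_eq_sq_iff_eq_or_eq_neg.mp hΔ with he | he
    · rcases eq_perm_of_symmetric (x := n) (y := -m) (z := m - n) (x' := n') (y' := -m')
        (z' := m' - n') (by ring) (by linear_combination -hI) (by linear_combination -he) with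
        h | h | h | h | h | h
      · grind
      · grind
      · grind
      all_goals
        obtain ⟨rfl, hm⟩ := h
        obtain rfl := neg_eq_iff_eq_neg.mp hm
        rcases hodd (by linear_combination -hJ) with h | h | h | h <;> grind
    · rcases eq_perm_of_symmetric (x := -n) (y := m) (z := n - m) (x' := n') (y' := -m')
        (z' := m' - n') (by ring) (by linear_combination -hI) (by linear_combination -he) with
        h | h | h | h | h | h
      iterate 3
        obtain ⟨rfl, hm⟩ := h
        obtain rfl := neg_eq_iff_eq_neg.mp hm
        rcases hodd (by linear_combination -hJ) with h | h | h | h <;> grind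
      all_goals grind
  obtain ⟨r₁, h₁⟩ := exists_isImage_baseVec_rotate m n
  obtain ⟨r₂, h₂⟩ := exists_isImage_baseVec_rotate (n - m) (-m)
  obtain ⟨s, hs⟩ := exists_isImage_baseVec_swap m n
  obtain ⟨s₁, hs₁⟩ := exists_isImage_baseVec_swap (n - m) (-m)
  obtain ⟨s₂, hs₂⟩ := exists_isImage_baseVec_swap (-n) (m - n)
  have h₂' : IsImage r₂ (baseVec (n - m) (-m)) (baseVec (-n) (m - n)) := by
    convert h₂ using 2 <;> ring
  rcases hlist with ⟨rfl, rfl⟩ | ⟨rfl, rfl⟩ | ⟨rfl, rfl⟩ | ⟨rfl, rfl⟩ | ⟨rfl, rfl⟩ | ⟨rfl, rfl⟩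
  · exact ⟨1, .one _⟩
  · exact ⟨_, h₁⟩
  · exact ⟨_, h₁.trans h₂'⟩
  · exact ⟨_, hs⟩
  · exact ⟨_, h₁.trans hs₁⟩
  · exact ⟨_, (h₁.trans h₂').trans hs₂⟩

end Slice

section Stabilizer

variable {L : Type*} [Field L]

theorem base_point_cases {x y z : L} (h : y * (x - z) = 0) (h' : z * (x - y) = 0) :
    (y = 0 ∧ z = 0) ∨ (x = 0 ∧ y = 0) ∨ (x = 0 ∧ z = 0) ∨ (x = y ∧ z = y) := by
  simp only [mul_eq_zero, sub_eq_zero] at h h'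
  grind

/-- A matrix of determinant one permuting the four base points has entries which are zero or
sixth roots of unity. -/
theorem pow_seven_eq_of_permutes_base_points {a₁ a₂ a₃ b₁ b₂ b₃ c₁ c₂ c₃ : L}
    (ha : (a₂ = 0 ∧ a₃ = 0) ∨ (a₁ = 0 ∧ a₂ = 0) ∨ (a₁ = 0 ∧ a₃ = 0) ∨ (a₁ = a₂ ∧ a₃ = a₂))
    (hb : (b₂ = 0 ∧ b₃ = 0) ∨ (b₁ = 0 ∧ b₂ = 0) ∨ (b₁ = 0 ∧ b₃ = 0) ∨ (b₁ = b₂ ∧ b₃ = b₂))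
    (hc : (c₂ = 0 ∧ c₃ = 0) ∨ (c₁ = 0 ∧ c₂ = 0) ∨ (c₁ = 0 ∧ c₃ = 0) ∨ (c₁ = c₂ ∧ c₃ = c₂))
    (hs : (a₂ + b₂ + c₂ = 0 ∧ a₃ + b₃ + c₃ = 0) ∨ (a₁ + b₁ + c₁ = 0 ∧ a₂ + b₂ + c₂ = 0) ∨
      (a₁ + b₁ + c₁ = 0 ∧ a₃ + b₃ + c₃ = 0) ∨
      (a₁ + b₁ + c₁ = a₂ + b₂ + c₂ ∧ a₃ + b₃ + c₃ = a₂ + b₂ + c₂))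
    (hdet : a₁ * b₂ * c₃ - a₁ * c₂ * b₃ - b₁ * a₂ * c₃ + b₁ * c₂ * a₃ + c₁ * a₂ * b₃
      - c₁ * b₂ * a₃ = 1) :
    (a₁ ^ 7 = a₁ ∧ a₂ ^ 7 = a₂ ∧ a₃ ^ 7 = a₃) ∧ (b₁ ^ 7 = b₁ ∧ b₂ ^ 7 = b₂ ∧ b₃ ^ 7 = b₃) ∧
      (c₁ ^ 7 = c₁ ∧ c₂ ^ 7 = c₂ ∧ c₃ ^ 7 = c₃) := by
  rcases ha with ⟨rfl, rfl⟩ | ⟨rfl, rfl⟩ | ⟨rfl, rfl⟩ | ⟨rfl, rfl⟩ <;>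
  rcases hb with ⟨rfl, rfl⟩ | ⟨rfl, rfl⟩ | ⟨rfl, rfl⟩ | ⟨rfl, rfl⟩ <;>
  rcases hc with ⟨rfl, rfl⟩ | ⟨rfl, rfl⟩ | ⟨rfl, rfl⟩ | ⟨rfl, rfl⟩ <;>
  first
  | exact absurd hdet (by ring_nf; exact zero_ne_one)
  | grind

theorem finite_pow_seven_eq {K : Type*} [Field K] : {e : K | e ^ 7 = e}.Finite := by
  have hne : (Polynomial.X ^ 7 - Polynomial.X : Polynomial K) ≠ 0 := by
    intro h
    have := congrArg (fun p => Polynomial.coeff p 7) h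
    simp [Polynomial.coeff_X] at this
  refine (Polynomial.finite_setOfPred_isRoot hne).subset fun e he => ?_
  simpa [Polynomial.IsRoot, sub_eq_zero] using he

theorem finite_SL3_pow_seven_eq :
    {B : SpecialLinearGroup (Fin 3) L | ∀ i j, B.1 i j ^ 7 = B.1 i j}.Finite := by
  have hfin : (Set.univ.pi fun _ : Fin 3 => Set.univ.pi fun _ : Fin 3 =>
      {e : L | e ^ 7 = e}).Finite :=
    Set.Finite.pi fun _ => Set.Finite.pi fun _ => finite_pow_seven_eq
  refine Set.Finite.of_finite_image (f := fun B : SpecialLinearGroup (Fin 3) L => B.1)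
    (hfin.subset ?_) Subtype.val_injective.injOn
  rintro _ ⟨B, hB, rfl⟩ i _ j _
  exact hB i j

theorem specialLinear_mulVec_inv_mulVec {d : ℕ} (A : SpecialLinearGroup (Fin d) L)
    (v : Fin d → L) : A.1 *ᵥ ((A⁻¹).1 *ᵥ v) = v := by
  have h : A.1 * (A⁻¹).1 = 1 := congrArg Subtype.val (mul_inv_cancel A)
  rw [mulVec_mulVec, h, one_mulVec]

theorem base_point_of_isImage {g : Group4 L} {m n : L}
    (h : IsImage g (baseVec m n) (baseVec m n)) {p : Fin 3 → L} (hp : p 1 * (p 0 - p 2) = 0)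
    (hp' : p 2 * (p 0 - p 1) = 0) :
    ((g.2.1.1 *ᵥ p) 1 = 0 ∧ (g.2.1.1 *ᵥ p) 2 = 0) ∨ ((g.2.1.1 *ᵥ p) 0 = 0 ∧ (g.2.1.1 *ᵥ p) 1 = 0) ∨
      ((g.2.1.1 *ᵥ p) 0 = 0 ∧ (g.2.1.1 *ᵥ p) 2 = 0) ∨
      ((g.2.1.1 *ᵥ p) 0 = (g.2.1.1 *ᵥ p) 1 ∧ (g.2.1.1 *ᵥ p) 2 = (g.2.1.1 *ᵥ p) 1) := by
  have hzero : ∀ w, evalF (baseVec m n) w (g.2.1.1 *ᵥ p) = 0 := by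
    intro w
    have := h.1 ((g.1⁻¹).1 *ᵥ w) p
    rw [specialLinear_mulVec_inv_mulVec, evalF_baseVec, hp, hp', mul_zero, mul_zero, add_zero] at this
    exact (mul_eq_zero.mp this.symm).resolve_left (inv_ne_zero g.2.2.ne_zero)
  have h0 := hzero ![1, 0]
  have h1 := hzero ![0, 1]
  rw [evalF_baseVec] at h0 h1
  exact base_point_cases (by simpa using h0) (by simpa using h1)

theorem finite_stabilizer_baseVec (m n : L) :
    {g : Group4 L | IsImage g (baseVec m n) (baseVec m n)}.Finite := by
  refine Set.Finite.of_finite_fibers (fun g : Group4 L => g.2.1)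
    (finite_SL3_pow_seven_eq.subset ?_) ?_
  · rintro _ ⟨g, hg, rfl⟩
    have hg : IsImage g (baseVec m n) (baseVec m n) := hg
    have h1 := base_point_of_isImage hg (p := ![1, 0, 0]) (by simp) (by simp)
    have h2 := base_point_of_isImage hg (p := ![0, 1, 0]) (by simp) (by simp)
    have h3 := base_point_of_isImage hg (p := ![0, 0, 1]) (by simp) (by simp)
    have h4 := base_point_of_isImage hg (p := ![1, 1, 1]) (by simp) (by simp)
    simp only [mulVec, dotProduct, Fin.sum_univ_three, cons_val, mul_one, mul_zero, add_zero,
      zero_add] at h1 h2 h3 h4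
    have hdet := g.2.1.2
    rw [det_fin_three] at hdet
    obtain ⟨⟨k1, k2, k3⟩, ⟨k4, k5, k6⟩, k7, k8, k9⟩ :=
      pow_seven_eq_of_permutes_base_points h1 h2 h3 h4 (by linear_combination hdet)
    intro i j
    fin_cases i <;> fin_cases j <;> assumption
  · rintro _ ⟨g, hg, rfl⟩
    have hg : IsImage g (baseVec m n) (baseVec m n) := hg
    have key : ∀ k : Group4 L, IsImage k (baseVec m n) (baseVec m n) → k.2.1 = g.2.1 →
        ∀ u i, (k.2.2 : L)⁻¹ * (k.1.1 *ᵥ u) i = (g.2.2 : L)⁻¹ * (g.1.1 *ᵥ u) i := by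
      intro k hk hkg u
      have hF : ∀ x, (k.2.2 : L)⁻¹ * evalF (baseVec m n) (k.1.1 *ᵥ u) x
          = (g.2.2 : L)⁻¹ * evalF (baseVec m n) (g.1.1 *ᵥ u) x := by
        intro x
        have e1 := hk.1 u ((g.2.1⁻¹).1 *ᵥ x)
        have e2 := hg.1 u ((g.2.1⁻¹).1 *ᵥ x)
        rw [hkg, specialLinear_mulVec_inv_mulVec] at e1
        rw [specialLinear_mulVec_inv_mulVec] at e2
        exact e1.symm.trans e2
      have h0 := hF ![1, 1, 0]
      have h1 := hF ![1, 0, 1]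
      rw [evalF_baseVec, evalF_baseVec] at h0 h1
      intro i
      fin_cases i
      · simpa using h0
      · simpa using h1
    have hentry : ∀ k : Group4 L, IsImage k (baseVec m n) (baseVec m n) → k.2.1 = g.2.1 →
        ∀ i j, k.1.1 i j = k.2.2 * ((g.2.2 : L)⁻¹ * g.1.1 i j) := by
      intro k hk hkg i j
      have := key k hk hkg (Pi.single j 1) i
      simp only [mulVec_single_one, col_apply] at this
      rw [← this, mul_inv_cancel_left₀ k.2.2.ne_zero]
    refine Set.Finite.of_finite_image (f := fun k : Group4 L => k.2.2)
      ((Set.toFinite {g.2.2, -g.2.2}).subset ?_) ?_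
    · rintro _ ⟨k, ⟨hk, hkg⟩, rfl⟩
      have hdet := k.1.2
      have hdet' := g.1.2
      rw [det_fin_two] at hdet hdet'
      simp only [hentry k hk hkg] at hdet
      have hsq : (k.2.2 : L) ^ 2 = (g.2.2 : L) ^ 2 := by
        have := g.2.2.ne_zero
        field_simp at hdet
        linear_combination hdet - (k.2.2 : L) ^ 2 * hdet'
      rcases sq_eq_sq_iff_eq_or_eq_neg.mp hsq with h | h
      · exact .inl (Units.ext h)
      · exact .inr (Units.ext h)
    · rintro k ⟨hk, hkg⟩ k' ⟨hk', hkg'⟩ ht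
      have ht : k.2.2 = k'.2.2 := ht
      refine Prod.ext (Subtype.ext ?_) (Prod.ext (Eq.trans hkg (Eq.symm hkg')) ht)
      ext i j
      rw [hentry k hk hkg, hentry k' hk' hkg', ht]

end Stabilizer

section Stable

variable {L : Type*} [Field L] [IsAlgClosed L]

theorem map_v4QuarticCoeffs {R S : Type*} [CommRing R] [CommRing S] (φ : R →+* S)
    (c : Fin 14 → R) : (fun i => φ (v4QuarticCoeffs c i)) = v4QuarticCoeffs fun i => φ (c i) := by
  funext i
  fin_cases i <;> simp [v4QuarticCoeffs, map_ofNat]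

/-- An orbit with nonvanishing `Δ₄` is a level set of the invariants. -/
theorem exists_isImage_iff_invariants {c c' : Fin 14 → L} (hc : Delta4 c ≠ 0) :
    (∃ g : Group4 L, IsImage g c c') ↔
      quarticI (v4QuarticCoeffs c') = quarticI (v4QuarticCoeffs c) ∧
      quarticJ (v4QuarticCoeffs c') = quarticJ (v4QuarticCoeffs c) ∧ Delta4 c' = Delta4 c := by
  have : Infinite L := IsAlgClosed.instInfinite
  refine ⟨fun ⟨g, hg⟩ => hg.invariants, fun ⟨hI, hJ, hΔ⟩ => ?_⟩
  obtain ⟨g, m, n, hg⟩ := exists_isImage_baseVec c hc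
  obtain ⟨g', m', n', hg'⟩ := exists_isImage_baseVec c' (hΔ ▸ hc)
  obtain ⟨i, j, d⟩ := hg.invariants
  obtain ⟨i', j', d'⟩ := hg'.invariants
  obtain ⟨bi, bj, bd⟩ := invariants_baseVec m n
  obtain ⟨bi', bj', bd'⟩ := invariants_baseVec m' n'
  obtain ⟨k, hk⟩ := exists_isImage_baseVec_of_invariants (m := m) (n := n) (m' := m') (n' := n')
    (by rw [← bi, ← bi', ← i, ← i', hI]) (by rw [← neg_inj, ← bj, ← bj', ← j, ← j', hJ])
    (by rw [← bd, ← bd', ← d, ← d', hΔ])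
  exact ⟨_, (hg.symm.trans hk).trans hg'⟩

theorem isZariskiClosed_orbit {c : Fin 14 → L} (hc : Delta4 c ≠ 0) :
    IsZariskiClosed {c' : Fin 14 → L | ∃ g : Group4 L, IsImage g c c'} := by
  let q : Fin 5 → MvPolynomial (Fin 14) L := v4QuarticCoeffs MvPolynomial.X
  refine ⟨{quarticI q - .C (quarticI (v4QuarticCoeffs c)),
    quarticJ q - .C (quarticJ (v4QuarticCoeffs c)), quarticDisc q - .C (Delta4 c)}, ?_⟩
  ext c'
  have hq : (fun i => MvPolynomial.eval c' (q i)) = v4QuarticCoeffs c' := by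
    simp only [q, map_v4QuarticCoeffs, MvPolynomial.eval_X]
  have hΔ : quarticDisc (v4QuarticCoeffs c') = Delta4 c' := rfl
  simp only [Set.mem_ofPred_eq, exists_isImage_iff_invariants hc, Set.mem_insert_iff,
    Set.mem_singleton_iff, forall_eq_or_imp, forall_eq, map_sub, map_quarticI, map_quarticJ,
    map_quarticDisc, MvPolynomial.eval_C, hq, hΔ, sub_eq_zero]

theorem stable4_of_Delta4_ne_zero (c : Fin 14 → L) (hc : Delta4 c ≠ 0) : Stable4 c := by
  have : Infinite L := IsAlgClosed.instInfinite
  obtain ⟨g, m, n, hg⟩ := exists_isImage_baseVec c hc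
  refine ⟨?_, ?_⟩
  · simpa only [toV4_eq_act4_iff] using isZariskiClosed_orbit hc
  · have := finite_stabilizer_of_isImage hg (finite_stabilizer_baseVec m n)
    simpa only [eq_comm (b := toV4 c), toV4_eq_act4_iff] using this

end Stable

/-
STATEMENT 7 (Theorem 4.2): a vector v = (F,G) ∈ V₄ is stable for the action of
G₄ = SL₂(L) × SL₃(L) × Lˣ if and only if Δ₄(v) ≠ 0.
-/
theorem stable4_iff_Delta4_ne_zero
    {L : Type*} [Field L] [IsAlgClosed L] (c : Fin 14 → L) :
    Stable4 c ↔ Delta4 c ≠ 0 :=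
  ⟨fun h hΔ => not_stable4_of_Delta4_eq_zero c hΔ h, stable4_of_Delta4_ne_zero c⟩
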